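/- arXiv:1801.07179 — 5 statements merged into one kernel-verified Lean document; each statement's English description precedes it below -/
import Mathlib

section
/- Every Newman quadrinomial X^a + X^b + X^c + 1 with integers 0 < c < b < a ≤ 15, except possibly for the eight quadrinomials X^15+X^14+X^10+1, X^15+X^12+X^10+1, X^15+X^12+X^4+1, X^15+X^8+X^6+1 and their reciprocals X^15+X^5+X+1, X^15+X^5+X^3+1 (i.e. X^15+X^5+X^3+1 written with exponents (5,3)), X^15+X^11+X^3+1, X^15+X^9+X^7+1, divides some Littlewood polynomial. -/
open Polynomial

/-- A Littlewood polynomial: a nonzero integer polynomial all of whose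
coefficients (up to its degree) are `-1` or `1`. -/
def IsLittlewood (P : Polynomial ℤ) : Prop :=
  P ≠ 0 ∧ ∀ i ≤ P.natDegree, P.coeff i = 1 ∨ P.coeff i = -1

/-!
### Strategy

Let `P = X ^ a + X ^ b + X ^ c + 1`. We look for a multiple `P * Q` which is a Littlewood polynomial
of degree `n - 1` such that all coefficients of `Q` lie in `{-1, 0, 1}`. The support of `Q` is forced
by the congruence `P * Q ≡ 1 + X + ⋯ + X ^ (n - 1)` modulo `2`, which is solvable as soon as
`X ^ n ≡ 1` modulo `2` and `(X + 1) * P`. Each coefficient of `P * Q` is then a sum of one or three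
signs, so that it only remains to choose the signs in such a way that no three signs that meet in a
coefficient of `P * Q` are equal. Such signs are found by a local search, starting from pseudorandom
signs.

Sets of exponents are represented by the binary digits of natural numbers, so that all exponents are
treated in parallel. The functions below are written in terms of the functions on `ℕ` for which the
kernel has binary arithmetic, and they are meant to be evaluated by the kernel.
-/

/-- `f x`, in a form that makes the kernel evaluate `x` first. -/
def evalThen {α : Type} (x : ℕ) (f : ℕ → α) : α :=
  Nat.rec (f 0) (fun m _ => f m.succ) x

theorem evalThen_eq {α : Type} (x : ℕ) (f : ℕ → α) : evalThen x f = f x := by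
  cases x <;> rfl

/-- Multiplication of `t` by `X ^ (a * i) + X ^ (b * i) + X ^ (c * i) + 1` over the field with two
elements. -/
def mulQuadrinomial (a b c i t : ℕ) : ℕ :=
  ((t.xor (t.shiftLeft (c.mul i))).xor (t.shiftLeft (b.mul i))).xor (t.shiftLeft (a.mul i))

/-- The exponents which meet `q` in the product with `X ^ a + X ^ b + X ^ c + 1`. -/
def spread (a b c q : ℕ) : ℕ :=
  ((q.lor (q.shiftLeft c)).lor (q.shiftLeft b)).lor (q.shiftLeft a)

/-- The exponents which meet `t` at least three times in the product with
`X ^ a + X ^ b + X ^ c + 1`. -/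
def tripleSpread (a b c t : ℕ) : ℕ :=
  ((t.land (t.shiftLeft c)).land ((t.shiftLeft b).lor (t.shiftLeft a))).lor
    (((t.shiftLeft b).land (t.shiftLeft a)).land (t.lor (t.shiftLeft c)))

/-- Given `k` rounds starting from `i = 1`, divide `t` by `X ^ a + X ^ b + X ^ c + 1` over the field
with two elements, modulo `X ^ n` where `n ≤ 2 ^ k`: the inverse of `P` is the product of the
`P (X ^ (2 ^ j))` with `j < k`. -/
def divQuadrinomial (a b c n : ℕ) : ℕ → ℕ → ℕ → ℕ
  | 0, _, t => t
  | k + 1, i, t =>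
    evalThen ((mulQuadrinomial a b c i t).mod (Nat.pow 2 n)) (divQuadrinomial a b c n k (i.mul 2))

/-- The exponents in `T` which meet only equal signs, when the support is `t` and the positive signs
are given by `w`. -/
def monochromatic (a b c t T w : ℕ) : ℕ :=
  evalThen (t.land w) fun u =>
    T.xor (T.land ((spread a b c u).land (spread a b c (t.xor u))))

/-- Local search for signs without monochromatic exponents: in each round, every monochromatic
exponent `e` asks for a change of the sign at `e - d₀` or at `e - d₁`, depending on a digit of the
pseudorandom number `R`. -/
def repair (a b c t T R : ℕ) : ℕ → ℕ → ℕ → ℕ → ℕ → ℕ → ℕ → ℕ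
  | 0, _, _, _, _, _, w => w
  | k + 1, r, d₀, d₁, d₂, d₃, w =>
    Nat.rec w (fun m _ =>
      evalThen (m.succ.land (R.shiftRight r)) fun x =>
        evalThen (w.xor (((x.shiftRight d₀).lor ((m.succ.xor x).shiftRight d₁)).land t))
          (repair a b c t T R k (r.add 17) d₁ d₂ d₃ d₀))
      (monochromatic a b c t T w)

/-- The polynomial with support `t` and positive signs `w` is a cofactor of
`X ^ a + X ^ b + X ^ c + 1` in a Littlewood polynomial of degree `n - 1`. -/
def isCofactor (a b c n t w : ℕ) : Bool :=
  Nat.blt 0 n && Nat.blt (t.shiftLeft a) (Nat.pow 2 n) &&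
    Nat.beq (mulQuadrinomial a b c 1 t) ((Nat.pow 2 n).sub 1) &&
    Nat.beq (monochromatic a b c t (tripleSpread a b c t) w) 0

/-- The local search for a Littlewood multiple of `X ^ a + X ^ b + X ^ c + 1` of degree `n - 1`
succeeds when it is started from the seed `s`. -/
def searchSucceeds (a b c n s : ℕ) : Bool :=
  evalThen (divQuadrinomial a b c n 15 1 ((Nat.pow 2 n).sub 1)) fun t =>
  evalThen (tripleSpread a b c t) fun T =>
  evalThen (Nat.pow 3 40000) fun R =>
  evalThen (R.shiftRight s) fun w₀ =>
  evalThen (repair a b c t T R 1000 s 0 c b a w₀) fun w =>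
  isCofactor a b c n t w

theorem exists_isCofactor {a b c n s : ℕ} (h : searchSucceeds a b c n s = true) :
    ∃ t w, isCofactor a b c n t w = true := by
  simp only [searchSucceeds, evalThen_eq] at h
  exact ⟨_, _, h⟩

theorem land_eq_and (x y : ℕ) : x.land y = x &&& y := rfl

theorem lor_eq_or (x y : ℕ) : x.lor y = x ||| y := rfl

theorem xor_eq_xor (x y : ℕ) : x.xor y = x ^^^ y := rfl

theorem shiftLeft_eq_shiftLeft (x y : ℕ) : x.shiftLeft y = x <<< y := rfl

/-- The coefficient `1`, `-1` or `0` given by a digit of the support and a digit of the signs. -/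
def signOfBits (x y : Bool) : ℤ :=
  if x then if y then 1 else -1 else 0

theorem signOfBits_testBit_shiftLeft (t w d i : ℕ) :
    signOfBits ((t <<< d).testBit i) ((w <<< d).testBit i) =
      if d ≤ i then signOfBits (t.testBit (i - d)) (w.testBit (i - d)) else 0 := by
  by_cases h : d ≤ i <;> simp [Nat.testBit_shiftLeft, h, signOfBits]

theorem sum_signOfBits_of_not_monochromatic (x₀ x₁ x₂ x₃ y₀ y₁ y₂ y₃ : Bool)
    (hodd : (((x₀ ^^ x₁) ^^ x₂) ^^ x₃) = true)
    (hmono : (let T := ((x₀ && x₁) && (x₂ || x₃)) || ((x₂ && x₃) && (x₀ || x₁))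
      T ^^ (T &&
        (((((x₀ && y₀) || (x₁ && y₁)) || (x₂ && y₂)) || (x₃ && y₃)) &&
          ((((x₀ ^^ (x₀ && y₀)) || (x₁ ^^ (x₁ && y₁))) || (x₂ ^^ (x₂ && y₂))) ||
            (x₃ ^^ (x₃ && y₃)))))) = false) :
    signOfBits x₃ y₃ + signOfBits x₂ y₂ + signOfBits x₁ y₁ + signOfBits x₀ y₀ = 1 ∨
      signOfBits x₃ y₃ + signOfBits x₂ y₂ + signOfBits x₁ y₁ + signOfBits x₀ y₀ = -1 := by
  revert x₀ x₁ x₂ x₃ y₀ y₁ y₂ y₃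
  decide

theorem isLittlewood_of_coeff {L : ℤ[X]} {n : ℕ} (hn : 0 < n)
    (hlt : ∀ i < n, L.coeff i = 1 ∨ L.coeff i = -1) (hge : ∀ i, n ≤ i → L.coeff i = 0) :
    IsLittlewood L := by
  have h0 : L ≠ 0 := by
    rintro rfl
    simpa using hlt 0 hn
  refine ⟨h0, fun i hi => hlt i (hi.trans_lt ?_)⟩
  by_contra! h
  exact h0 (leadingCoeff_eq_zero.mp (hge _ h))

theorem exists_littlewood_multiple_of_isCofactor {a b c n t w : ℕ} (hcb : c < b) (hba : b < a)
    (h : isCofactor a b c n t w = true) :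
    ∃ L : ℤ[X], IsLittlewood L ∧ (X ^ a + X ^ b + X ^ c + 1 : ℤ[X]) ∣ L := by
  simp only [isCofactor, Bool.and_eq_true, Nat.blt_eq, Nat.beq_eq] at h
  obtain ⟨⟨⟨hn, hdeg⟩, hparity⟩, hmono⟩ := h
  replace hdeg : t <<< a < 2 ^ n := hdeg
  replace hparity : ((t ^^^ t <<< c) ^^^ t <<< b) ^^^ t <<< a = 2 ^ n - 1 := by
    simpa [mulQuadrinomial] using hparity
  have hzero : ∀ d ≤ a, ∀ i, n ≤ i → (t <<< d).testBit i = false := fun d hd i hi =>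
    Nat.testBit_lt_two_pow <| calc
      t <<< d ≤ t <<< a := by
        simp only [Nat.shiftLeft_eq]
        gcongr
        exact one_le_two
      _ < 2 ^ n := hdeg
      _ ≤ 2 ^ i := Nat.pow_le_pow_right two_pos hi
  have hzero₀ (i : ℕ) (hi : n ≤ i) : t.testBit i = false := hzero 0 (Nat.zero_le a) i hi
  let Q : ℤ[X] := ∑ i ∈ Finset.range n, C (signOfBits (t.testBit i) (w.testBit i)) * X ^ i
  have hQ (i : ℕ) : Q.coeff i = signOfBits (t.testBit i) (w.testBit i) := by
    simp only [Q, finsetSum_coeff, coeff_C_mul_X_pow, Finset.sum_ite_eq, Finset.mem_range]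
    split_ifs with hi
    · rfl
    · simp [hzero₀ i (not_lt.mp hi), signOfBits]
  have hL (i : ℕ) : ((X ^ a + X ^ b + X ^ c + 1) * Q).coeff i =
      signOfBits ((t <<< a).testBit i) ((w <<< a).testBit i) +
      signOfBits ((t <<< b).testBit i) ((w <<< b).testBit i) +
      signOfBits ((t <<< c).testBit i) ((w <<< c).testBit i) +
      signOfBits (t.testBit i) (w.testBit i) := by
    simp only [add_mul, one_mul, coeff_add, coeff_X_pow_mul', hQ, signOfBits_testBit_shiftLeft]
  refine ⟨_, isLittlewood_of_coeff hn (fun i hi => ?_) (fun i hi => ?_), dvd_mul_right _ Q⟩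
  · rw [hL]
    apply sum_signOfBits_of_not_monochromatic
    · have := congrArg (Nat.testBit · i) hparity
      simpa [Nat.testBit_two_pow_sub_one, hi] using this
    · have := congrArg (Nat.testBit · i) hmono
      simpa only [monochromatic, evalThen_eq, spread, tripleSpread, land_eq_and, lor_eq_or,
        xor_eq_xor, shiftLeft_eq_shiftLeft, Nat.shiftLeft_xor_distrib, Nat.shiftLeft_and_distrib,
        Nat.testBit_xor, Nat.testBit_and, Nat.testBit_or, Nat.zero_testBit] using this
  · simp [hL, hzero₀ i hi, hzero a le_rfl i hi, hzero b hba.le i hi,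
      hzero c (hcb.trans hba).le i hi, signOfBits]

/-- The values of `searchParameters a b c` for `0 < c < b < a ≤ 15`. -/
def searchTable : List (List (List (ℕ × ℕ))) := [
  [[(4, 0)]],
  [[(14, 0)], [(12, 0), (14, 0)]],
  [[(28, 1)], [(30, 1), (12, 0)], [(8, 0), (30, 0), (28, 3)]],
  [[(62, 0)], [(28, 1), (62, 1)], [(42, 6), (8, 0), (62, 0)], [(20, 1), (42, 3), (28, 0),
    (62, 0)]],
  [[(60, 0)], [(30, 1), (124, 211)], [(124, 0), (126, 1), (24, 0)], [(126, 21), (20, 0), (126, 0),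
    (124, 54)], [(12, 0), (126, 14), (124, 0), (30, 0), (60, 0)]],
  [[(254, 4)], [(84, 1), (186, 193)], [(254, 1), (28, 0), (254, 6)], [(120, 2), (210, 1), (60, 0),
    (254, 1)], [(254, 26), (24, 0), (210, 0), (28, 0), (186, 104)], [(28, 0), (254, 115),
    (120, 34), (254, 23), (84, 8), (254, 7)]],
  [[(508, 33)], [(170, 8), (252, 3)], [(168, 22), (102, 0), (420, 262)], [(434, 2), (372, 85),
    (510, 155), (40, 0)], [(508, 130), (510, 280), (12, 0), (510, 91), (420, 70)], [(126, 126),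
    (28, 0), (510, 217), (372, 107), (102, 2), (252, 1)], [(16, 0), (126, 89), (508, 290),
    (434, 3), (168, 9), (170, 46), (508, 22)]],
  [[(930, 166)], [(372, 10), (1022, 5)], [(930, 119), (56, 3), (762, 71)], [(1020, 115),
    (1022, 85), (508, 38), (126, 4)], [(210, 65), (60, 2), (1022, 76), (24, 0), (126, 1)],
    [(508, 196), (310, 23), (84, 0), (1022, 110), (508, 39), (762, 104)], [(146, 26), (16, 0),
    (310, 158), (60, 2), (1022, 68), (56, 2), (1022, 128)], [(36, 0), (146, 103), (508, 211),
    (210, 146), (1020, 48), (930, 162), (372, 113), (930, 101)]],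
  [[(868, 91)], [(2046, 137), (420, 51)], [(2044, 51), (2046, 40), (1016, 95)], [(630, 278),
    (204, 3), (1302, 14), (2044, 48)], [(868, 170), (510, 125), (2044, 137), (210, 38), (60, 0)],
    [(682, 233), (1860, 52), (682, 35), (56, 0), (210, 25), (2044, 79)], [(1860, 19), (1778, 114),
    (48, 0), (682, 233), (2044, 127), (1302, 129), (1016, 100)], [(1778, 95), (36, 0), (1778, 48),
    (1860, 48), (510, 18), (204, 9), (2046, 47), (420, 266)], [(20, 0), (1778, 143), (1860, 80),
    (682, 216), (868, 14), (630, 128), (2044, 45), (2046, 106), (868, 24)]],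
  [[(1190, 89)], [(4092, 102), (178, 5)], [(438, 163), (124, 1), (3570, 138)], [(1016, 90),
    (930, 264), (1260, 149), (3810, 32)], [(3810, 40), (56, 0), (42, 0), (124, 0), (3906, 116)],
    [(252, 95), (4094, 11), (1016, 1), (3066, 18), (140, 0), (3906, 104)], [(1302, 92), (84, 49),
    (3906, 90), (16, 0), (3066, 85), (124, 7), (3810, 78)], [(1736, 84), (3810, 71), (36, 0),
    (3906, 88), (1016, 44), (42, 0), (1260, 80), (3570, 113)], [(3066, 80), (40, 0), (3810, 2),
    (84, 23), (4094, 51), (56, 0), (930, 140), (124, 4), (178, 35)], [(44, 0), (3066, 20),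
    (1736, 41), (1302, 80), (252, 256), (3810, 115), (1016, 131), (438, 107), (4092, 139),
    (1190, 50)]],
  [[(8188, 16)], [(5334, 117), (1260, 38)], [(1736, 70), (7874, 71), (6132, 104)], [(234, 38),
    (2380, 71), (2170, 80), (4088, 145)], [(1524, 40), (1170, 30), (1260, 122), (2046, 36),
    (8188, 56)], [(2730, 81), (4092, 104), (2046, 85), (8188, 93), (7874, 73), (84, 0)],
    [(4088, 26), (1638, 71), (1428, 47), (6510, 81), (80, 0), (7874, 121), (8188, 10)],
    [(630, 283), (8188, 129), (2730, 123), (72, 0), (6510, 96), (8188, 97), (2046, 77),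
    (4088, 117)], [(2380, 124), (2730, 6), (60, 0), (2730, 43), (1428, 5), (2046, 138),
    (1260, 80), (2170, 116), (6132, 22)], [(6510, 114), (44, 0), (2730, 133), (8188, 77),
    (1638, 78), (4092, 99), (1170, 50), (2380, 145), (7874, 56), (1260, 17)], [(24, 0), (6510, 6),
    (2380, 85), (630, 203), (4088, 71), (2730, 58), (1524, 88), (234, 52), (1736, 81), (5334, 41),
    (8188, 142)]],
  [[(16382, 140)], [(8188, 121), (12282, 77)], [(15810, 16), (120, 0), (16382, 25)], [(15748, 83),
    (16382, 19), (6132, 55), (5110, 98)], [(2190, 90), (60, 8), (16002, 97), (248, 93),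
    (12282, 147)], [(8188, 114), (16382, 140), (15748, 124), (15330, 46), (8188, 8), (3162, 81)],
    [(1778, 50), (248, 4), (3906, 81), (252, 4), (16382, 107), (48, 0), (3162, 16)], [(1020, 121),
    (1302, 81), (7620, 51), (16382, 125), (180, 0), (16382, 129), (8188, 5), (12282, 28)],
    [(5334, 88), (252, 254), (1778, 145), (40, 0), (16382, 0), (252, 4), (15330, 38), (248, 12),
    (5110, 111)], [(8188, 142), (16382, 22), (132, 0), (1778, 71), (7620, 19), (3906, 72),
    (15748, 123), (16002, 75), (6132, 145), (16382, 30)], [(15810, 28), (24, 0), (16382, 9),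
    (252, 108), (1302, 120), (248, 1), (16382, 29), (60, 1), (16382, 129), (120, 0), (12282, 31)],
    [(52, 0), (15810, 42), (8188, 51), (5334, 90), (1020, 141), (1778, 125), (8188, 138),
    (2190, 81), (15748, 93), (15810, 92), (8188, 79), (16382, 8)]],
  [[(3276, 125)], [(254, 61), (32764, 112)], [(24564, 36), (3906, 49), (2728, 47)], [(10922, 112),
    (10668, 81), (32766, 138), (32764, 94)], [(1020, 96), (10922, 33), (84, 14), (28658, 49),
    (15748, 48)], [(126, 48), (10220, 64), (254, 57), (12264, 145), (32766, 80), (31620, 98)],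
    [(10540, 24), (2730, 0), (5080, 9), (31682, 4), (24564, 136), (32766, 115), (112, 0)],
    [(10922, 119), (15748, 32), (90, 6), (1260, 124), (28658, 25), (36, 0), (32766, 68),
    (31620, 51)], [(4092, 67), (10710, 22), (32764, 143), (23622, 98), (20, 0), (28658, 64),
    (24564, 41), (32766, 22), (15748, 18)], [(3410, 141), (7140, 33), (31682, 22), (88, 0),
    (23622, 38), (1260, 15), (31682, 27), (12264, 121), (28658, 55), (32764, 108)], [(32764, 127),
    (8890, 10), (24, 0), (31682, 77), (32764, 140), (90, 0), (5080, 136), (254, 84), (84, 16),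
    (32766, 45), (2728, 14)], [(23622, 128), (52, 0), (8890, 103), (7140, 36), (10710, 27),
    (15748, 52), (2730, 57), (10220, 10), (10922, 78), (10668, 67), (3906, 97), (32764, 98)],
    [(28, 0), (23622, 131), (32764, 137), (3410, 72), (4092, 128), (10922, 140), (10540, 15),
    (126, 69), (1020, 110), (10922, 24), (24564, 42), (254, 201), (3276, 0)]]]

/-- The length `n` and the seed `s` of a successful search for the quadrinomial
`X ^ a + X ^ b + X ^ c + 1`: here `n` is the order of `X` modulo `2` and `(X + 1) * P`. -/
def searchParameters (a b c : ℕ) : ℕ × ℕ :=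
  ((searchTable.getD (a - 3) []).getD (b - 2) []).getD (c - 1) (0, 0)

set_option maxHeartbeats 10000000 in
theorem exists_searchSucceeds {a b c : ℕ} (hc : 0 < c) (hcb : c < b) (hba : b < a) (ha : a ≤ 15) :
    ∃ n s, searchSucceeds a b c n s = true := by
  suffices h : ∀ c' < b, 0 < c' → searchSucceeds a b c' (searchParameters a b c').1
      (searchParameters a b c').2 = true from ⟨_, _, h c hcb hc⟩
  have hb : 2 ≤ b := by omega
  have ha' : 3 ≤ a := by omega
  clear hc hcb c
  interval_cases a <;> interval_cases b <;> decide +kernel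

theorem newman_quadrinomials_deg_le_15_have_littlewood_multiples
    (a b c : ℕ) (hc : 0 < c) (hcb : c < b) (hba : b < a) (ha : a ≤ 15)
    (hexc : (a, b, c) ∉ ([(15, 14, 10), (15, 12, 10), (15, 12, 4), (15, 8, 6),
      (15, 5, 1), (15, 5, 3), (15, 11, 3), (15, 9, 7)] : List (ℕ × ℕ × ℕ))) :
    ∃ L : Polynomial ℤ, IsLittlewood L ∧
      (X ^ a + X ^ b + X ^ c + 1 : Polynomial ℤ) ∣ L := by
  obtain ⟨n, s, h⟩ := exists_searchSucceeds hc hcb hba ha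
  obtain ⟨t, w, h⟩ := exists_isCofactor h
  exact exists_littlewood_multiple_of_isCofactor hcb hba h
end

section
/- A monic Littlewood polynomial P of degree at most 12 divides some Newman polynomial and is not a product of cyclotomic polynomials if and only if P is one of the following nine polynomials: P₁ = X^6+X^5−X^4−X^3−X^2+X+1; P₂ = X^7+X^6−X^5+X^4+X^3−X^2+X+1; P₃ = X^8+X^7−X^6−X^5+X^4−X^3−X^2+X+1; P₄ = X^9+X^8+X^7−X^6−X^5−X^4−X^3+X^2+X+1; P₅ = X^10−X^9+X^8+X^7−X^6+X^5−X^4+X^3+X^2−X+1; P₆ = X^10+X^9+X^8−X^7−X^6−X^5−X^4−X^3+X^2+X+1; P₇ = X^12+X^11−X^10−X^9−X^8+X^7+X^6+X^5−X^4−X^3−X^2+X+1; P₈ = X^12−X^11+X^10+X^9−X^8+X^7+X^6+X^5−X^4+X^3+X^2−X+1; P₉ = X^12+X^11+X^10−X^9−X^8−X^7+X^6−X^5−X^4−X^3+X^2+X+1. -/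
open Polynomial

set_option maxHeartbeats 1000000

/-- A Newman polynomial: an integer polynomial with all coefficients `0` or `1`
and constant term `1`. -/
def IsNewman (P : Polynomial ℤ) : Prop :=
  P.coeff 0 = 1 ∧ ∀ i, P.coeff i = 0 ∨ P.coeff i = 1

/-- A product of cyclotomic polynomials `Φ_n`, `n ≥ 1` (possibly empty). -/
def IsCyclotomicProduct (P : Polynomial ℤ) : Prop :=
  ∃ l : List ℕ, (∀ n ∈ l, 1 ≤ n) ∧ P = (l.map fun n => cyclotomic n ℤ).prod

set_option maxRecDepth 100000

namespace LittlewoodNewman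

/-! ### The search procedure

Integer polynomials are given by their lists of coefficients, lowest degree first. The arithmetic is
arranged for evaluation in the kernel: only natural numbers occur, and they are reduced to numerals
early. A Gaussian integer `x + y I` is represented by `x + y J` modulo `M = J * J + 1`, and a
list `s` of integers of absolute value at most `32768` by the number `∑ (s i + 32768) * 65537 ^ i`. -/

/-- Continue with a natural number after evaluating it to a numeral. -/
def force {α : Type} (n : ℕ) (k : ℕ → α) : α :=
  Nat.rec (k 0) (fun m _ => k (Nat.succ m)) n

def sq (a : ℕ) : ℕ := force a fun a => Nat.mul a a

def dist (a b : ℕ) : ℕ := Nat.add (Nat.sub a b) (Nat.sub b a)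

/-- Newton iterates approximating a square root of `n` from above. -/
def approxSqrt (n : ℕ) : ℕ → ℕ → ℕ
  | 0, x => Nat.succ x
  | k + 1, x => force (Nat.div (Nat.add x (Nat.div n x)) 2) fun x => approxSqrt n k x

/-- Squared modulus of the Gaussian integer represented by `r`, where `H = J / 2`. -/
def normOf (J H M r : ℕ) : ℕ :=
  force (Nat.mod (Nat.add r (Nat.add H (Nat.mul H J))) M) fun r =>
    Nat.add (sq (dist (Nat.mod r J) H)) (sq (dist (Nat.div r J) H))

/-- Continue with the list of residues of `D ^ (n - 1 - i) * x * z ^ i` modulo `M` for `i < n`. -/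
def withWeights {α : Type} (D M z : ℕ) : ℕ → ℕ → (List ℕ → α) → α
  | 0, _, k => k []
  | n + 1, x, k =>
    force (Nat.mod (Nat.mul x (Nat.pow D n)) M) fun a =>
    force (Nat.mod (Nat.mul x z) M) fun x =>
    withWeights D M z n x fun l => k (a :: l)

/-- Residues of signs. -/
def residues (M : ℕ) : List ℤ → List ℕ
  | [] => []
  | Int.ofNat _ :: l => 1 :: residues M l
  | Int.negSucc _ :: l => Nat.pred M :: residues M l

/-- The sum of `(k + e * i) * a i * b i`. -/
def dot (e : ℕ) : ℕ → List ℕ → List ℕ → ℕ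
  | k, a :: l, b :: m => Nat.add (Nat.mul k (Nat.mul a b)) (dot e (Nat.add k e) l m)
  | _, _, _ => 0

/-- The dot product with the digits of a packed list. -/
def packedDot : List ℕ → ℕ → ℕ
  | [], _ => 0
  | w :: l, n => Nat.add (Nat.mul (Nat.mod n 65537) w)
      (force (Nat.div n 65537) fun n => packedDot l n)

/-- The packed list of `n` zeros. -/
def packedZero : ℕ → ℕ
  | 0 => 0
  | n + 1 => Nat.add 32768 (Nat.mul 65537 (packedZero n))

/-- Continue with a test rejecting packed remainders modulo the polynomial of degree `d` with
coefficients `p`, which rely on a root of this polynomial within `16 / D` of the Gaussian rational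
`z / D`. The existence of the root is checked by comparing the polynomial and its derivative. -/
def withTest (D J H M : ℕ) (p : List ℤ) (d z : ℕ) (k : (ℕ → Bool) → Bool) : Bool :=
  force (Nat.mod (Nat.add D (Nat.mul (Nat.pred M) z)) M) fun y =>
  force (normOf J H M z) fun m =>
  force (normOf J H M y) fun n =>
  force (approxSqrt m 7 D) fun r =>
  force (approxSqrt n 7 D) fun t =>
  force (Nat.sub D (Nat.add r 16)) fun q =>
  force (Nat.mul (Nat.pow D d) (Nat.add (Nat.mul D (Nat.add t 16))
    (Nat.mul q (Nat.mul 1536000 (sq d))))) fun b =>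
  Nat.ble m (sq r) && Nat.ble n (sq t) && Nat.ble 1 q && Nat.ble (Nat.succ b) H &&
  withWeights D M z (Nat.succ d) 1 fun w =>
  Nat.ble (Nat.mul (sq (Nat.mul d D)) (normOf J H M (dot 0 1 (residues M p) w)))
    (Nat.mul 256 (normOf J H M (dot 1 1 (residues M p.tail) w))) &&
  withWeights D M z d (Nat.mul D (Nat.mul 2 y)) fun w =>
  force (Nat.mod (Nat.add (Nat.pow D (Nat.succ d))
    (Nat.mul (Nat.pred M) (packedDot w (packedZero d)))) M) fun h =>
  force (Nat.succ (Nat.div (sq b) (sq q))) fun b =>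
  k fun s => Nat.ble b (normOf J H M (Nat.add h (packedDot w s)))

def memNat (a : ℕ) (l : List ℕ) : Bool :=
  List.rec false (fun b _ ih => bif Nat.beq a b then true else ih) l

/-- The packed form of `(s - t * p) / X`, where `t` makes the constant term vanish, `P` is the packed
form of `(p - 1) / X` without shift, and `K` corrects the shift. -/
def child (K P s : ℕ) : ℕ :=
  Nat.sub (Nat.add (Nat.div s 65537) K) (Nat.mul (Nat.mod s 65537) P)

/-- Search through all packed remainders reachable from those on a stack, discarding the dead ones;
the search fails if it meets the packed zero `o`. -/
def explore (o K P : ℕ) (dead : ℕ → Bool) : ℕ → List ℕ → List ℕ → Bool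
  | 0, _, _ => false
  | _ + 1, [], _ => true
  | n + 1, s :: stack, visited =>
    bif dead s then explore o K P dead n stack visited
    else bif memNat s visited then explore o K P dead n stack visited
    else bif Nat.beq s o then false
    else Nat.ble (dist (Nat.mod s 65537) 32768) 15 &&
      force (child K P s) fun s₀ =>
      force (Nat.sub s₀ P) fun s₁ =>
      explore o K P dead n (s₀ :: s₁ :: stack) (s :: visited)

/-- The sum of `65537 ^ i` over those `i` where the list has a nonnegative entry. -/
def packPos : List ℤ → ℕ
  | [] => 0
  | Int.ofNat _ :: l => Nat.add 1 (Nat.mul 65537 (packPos l))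
  | Int.negSucc _ :: l => Nat.mul 65537 (packPos l)

/-- The sum of `65537 ^ i` over those `i` where the list has a negative entry. -/
def packNeg : List ℤ → ℕ
  | [] => 0
  | Int.ofNat _ :: l => Nat.mul 65537 (packNeg l)
  | Int.negSucc _ :: l => Nat.add 1 (Nat.mul 65537 (packNeg l))

/-- Confirm that the polynomial of degree `d` with coefficients `p` has no Newman multiple by a
search with rejection tests at the given approximate roots. -/
def excludes (D J H M : ℕ) (p : List ℤ) (d : ℕ) : List ℕ → (ℕ → Bool) → Bool
  | [], dead =>
    Nat.ble (packNeg p.tail) (packPos p.tail) &&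
    force (Nat.sub (packPos p.tail) (packNeg p.tail)) fun P =>
    force (packedZero d) fun o =>
    force (Nat.mul 32768 (Nat.add P (Nat.pow 65537 (Nat.pred d)))) fun K =>
    force (Nat.sub o P) fun s =>
    explore o K P dead 950 [s] []
  | z :: l, dead => withTest D J H M p d z fun f =>
      excludes D J H M p d l fun s => bif dead s then true else f s

/-- Approximate roots stored as the base `10 ^ 21` digits of a number. -/
def decodeRoots (D J M : ℕ) : ℕ → ℕ → List ℕ
  | 0, _ => []
  | k + 1, n => bif Nat.beq n 0 then [] else
    force (Nat.mod n 1000000000000000000000) fun m =>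
    force (Nat.mod (Nat.add (Nat.div m D)
      (Nat.add (Nat.sub M D) (Nat.mul J (Nat.mod m D)))) M) fun z =>
    z :: decodeRoots D J M k (Nat.div n 1000000000000000000000)

/-- The number read in binary from the signs of a list. -/
def code : List ℤ → ℕ → ℕ
  | [], c => c
  | Int.ofNat _ :: l, c => code l (Nat.succ (Nat.mul 2 c))
  | Int.negSucc _ :: l, c => code l (Nat.mul 2 c)

/-- The number of nonnegative entries. -/
def numNonneg : List ℤ → ℕ
  | [] => 0
  | Int.ofNat _ :: l => Nat.succ (numNonneg l)
  | Int.negSucc _ :: l => numNonneg l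

/-- Run through the sign lists starting with `1`, ending with `l`, and having `m` entries in
between, and check them with successive entries of `data`, except for those with small sum
and those preceded by their reverse in the order given by `code`. -/
def covers (n : ℕ) (check : List ℤ → ℕ → Bool) : ℕ → List ℤ → List ℕ → (List ℕ → Bool) → Bool
  | 0, l, data, k =>
    bif Nat.ble (Nat.mul 2 (numNonneg l)) n then k data
    else bif Nat.ble (code (Int.ofNat 1 :: l) 0) (code (Int.ofNat 1 :: l).reverse 0) then
      match data with
      | [] => false
      | a :: data => check (Int.ofNat 1 :: l) a && k data
    else k data
  | m + 1, l, data, k =>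
    covers n check m (Int.ofNat 1 :: l) data fun data =>
    covers n check m (Int.negSucc 0 :: l) data k

/-- Check a sign list: an entry `0` claims that it belongs to `special`, any other entry that it has
no Newman multiple. -/
def check (special : List (List ℤ)) (D J H M d : ℕ) (p : List ℤ) (a : ℕ) : Bool :=
  bif Nat.beq a 0 then special.contains p
  else bif Nat.beq (Nat.mod a 10) 0 then
    excludes D J H M p d (decodeRoots D J M 4 (Nat.div a 10)) fun _ => false
  else excludes D J H M p.reverse d (decodeRoots D J M 4 (Nat.div a 10)) fun _ => false

/-- Check all sign lists of length `d + 1` that start and end with `1`. -/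
def checkDegree (special : List (List ℤ)) (data : List ℕ) (d : ℕ) : Bool :=
  force (Nat.succ (Nat.pow 10 10)) fun D =>
  force (Nat.pow 10 200) fun J =>
  force (Nat.div J 2) fun H =>
  force (Nat.succ (Nat.mul J J)) fun M =>
  covers (Nat.pred d) (check special D J H M d) (Nat.pred d) [Int.ofNat 1] data fun _ => true

/-! ### Polynomials given by coefficient lists -/

/-- The polynomial with the given coefficients, lowest degree first. -/
noncomputable def ofList : List ℤ → ℤ[X]
  | [] => 0
  | a :: l => C a + X * ofList l

theorem coeff_ofList (l : List ℤ) (i : ℕ) : (ofList l).coeff i = l.getD i 0 := by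
  induction l generalizing i with
  | nil => simp [ofList]
  | cons a l ih =>
    cases i with
    | zero => simp [ofList]
    | succ i => rw [ofList, coeff_add, coeff_C_succ, coeff_X_mul, ih, zero_add, List.getD_cons_succ]

theorem ofList_append (l m : List ℤ) :
    ofList (l ++ m) = ofList l + X ^ l.length * ofList m := by
  induction l with
  | nil => simp [ofList]
  | cons a l ih => simp only [List.cons_append, ofList, ih, List.length_cons]; ring

theorem ofList_replicate_zero (n : ℕ) : ofList (List.replicate n 0) = 0 := by
  induction n with
  | zero => rfl
  | succ n ih => simp [List.replicate_succ, ofList, ih]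

theorem degree_ofList_lt (l : List ℤ) : (ofList l).degree < l.length := by
  rw [degree_lt_iff_coeff_zero]
  intro i hi
  rw [coeff_ofList, List.getD_eq_default _ _ hi]

theorem monic_ofList (l : List ℤ) : (ofList (l ++ [1])).Monic := by
  have h : ofList (l ++ [1]) = X ^ l.length + ofList l := by
    rw [ofList_append]; simp [ofList, add_comm]
  rw [h]
  exact monic_X_pow_add (degree_ofList_lt l)

theorem natDegree_ofList (l : List ℤ) : (ofList (l ++ [1])).natDegree = l.length := by
  have h : ofList (l ++ [1]) = X ^ l.length + ofList l := by
    rw [ofList_append]; simp [ofList, add_comm]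
  rw [h]
  exact natDegree_eq_of_degree_eq_some
    ((degree_add_eq_left_of_degree_lt (by simpa using degree_ofList_lt l)).trans (degree_X_pow _))

theorem eq_ofList (P : ℤ[X]) :
    P = ofList ((List.range (P.natDegree + 1)).map P.coeff) := by
  ext i
  rw [coeff_ofList]
  by_cases hi : i < P.natDegree + 1
  · simp [hi]
  · rw [List.getD_eq_default _ _ (by simpa using hi)]
    exact coeff_eq_zero_of_natDegree_lt (by omega)

theorem eq_replicate_zero_of_dvd {P : ℤ[X]} (hP : P.Monic) {s : List ℤ}
    (hs : s.length ≤ P.natDegree) (h : P ∣ ofList s) : s = List.replicate s.length 0 := by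
  have h0 : ofList s = 0 := by
    by_contra h0
    refine hP.not_dvd_of_degree_lt h0 ?_ h
    refine (degree_ofList_lt s).trans_le ?_
    rw [degree_eq_natDegree hP.ne_zero]
    exact_mod_cast hs
  refine List.ext_getElem (by simp) fun i hi _ => ?_
  have := coeff_ofList s i
  rw [h0, List.getD_eq_getElem _ _ hi] at this
  simpa using this.symm

/-! ### Newman multiples -/

/-- No multiple of `P` is a Newman polynomial. -/
def NoNewmanMultiple (P : ℤ[X]) : Prop := ∀ N, IsNewman N → ¬P ∣ N

theorem one_le_aeval_of_isNewman {N : ℤ[X]} (hN : IsNewman N) {t : ℝ} (ht : 0 ≤ t) :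
    1 ≤ aeval t N := by
  rw [aeval_eq_sum_range, Finset.sum_range_succ']
  have : 0 ≤ ∑ i ∈ Finset.range N.natDegree, N.coeff (i + 1) • t ^ (i + 1) := by
    refine Finset.sum_nonneg fun i _ => ?_
    rcases hN.2 (i + 1) with h | h <;> (rw [h]; simp; try positivity)
  simpa [hN.1] using this

theorem noNewmanMultiple_of_eval_le {P : ℤ[X]} (hP : P.Monic) (hd : P.natDegree ≠ 0) {a : ℤ}
    (ha : 0 ≤ a) (h : P.eval a ≤ 0) : NoNewmanMultiple P := by
  intro N hN ⟨Q, hQ⟩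
  set p : ℝ[X] := P.map (Int.castRingHom ℝ) with hp
  have hmonic : p.Monic := hP.map _
  have htend : Filter.Tendsto (fun x => p.eval x) Filter.atTop Filter.atTop := by
    refine tendsto_atTop_of_leadingCoeff_nonneg p ?_ (by rw [hmonic.leadingCoeff]; norm_num)
    rw [hP.degree_map, degree_eq_natDegree hP.ne_zero]
    exact_mod_cast Nat.pos_of_ne_zero hd
  obtain ⟨b, hb, hab⟩ := ((htend.eventually_ge_atTop 0).and
    (Filter.eventually_ge_atTop (a : ℝ))).exists
  have hpa : p.eval (a : ℝ) ≤ 0 := by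
    rw [hp, eval_intCast_map, eq_intCast]
    exact_mod_cast h
  obtain ⟨t, ht, hroot⟩ := intermediate_value_Icc hab p.continuous.continuousOn ⟨hpa, hb⟩
  have hroot : aeval t P = 0 := by
    rw [← hroot, hp]; simp [aeval_def, eval₂_eq_eval_map]
  have := one_le_aeval_of_isNewman hN ((Int.cast_nonneg ha).trans ht.1)
  rw [hQ, map_mul, hroot, zero_mul] at this
  linarith

theorem isNewman_reverse {N : ℤ[X]} (hN : IsNewman N) : IsNewman N.reverse := by
  refine ⟨?_, fun i => by rw [coeff_reverse]; exact hN.2 _⟩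
  rw [coeff_zero_reverse]
  refine (hN.2 N.natDegree).resolve_left fun h => ?_
  have : N = 0 := leadingCoeff_eq_zero.mp h
  simpa [this] using hN.1

theorem reverse_ofList (l : List ℤ) :
    (ofList (1 :: (l ++ [1]))).reverse = ofList (1 :: (l ++ [1])).reverse := by
  ext i
  have hd : (ofList (1 :: (l ++ [1]))).natDegree = l.length + 1 := natDegree_ofList (1 :: l)
  rw [coeff_reverse, coeff_ofList, coeff_ofList, hd]
  by_cases hi : i ≤ l.length + 1
  · rw [revAt_le hi, List.getD_eq_getElem _ _ (by simp),
      List.getD_eq_getElem _ _ (by simp; omega), List.getElem_reverse]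
    congr 1
    simp
  · rw [revAt_eq_self_of_lt (by omega), List.getD_eq_default _ _ (by simp; omega),
      List.getD_eq_default _ _ (by simp; omega)]

theorem NoNewmanMultiple.reverse {l : List ℤ}
    (h : NoNewmanMultiple (ofList (1 :: (l ++ [1])).reverse)) :
    NoNewmanMultiple (ofList (1 :: (l ++ [1]))) := by
  rintro N hN ⟨Q, rfl⟩
  refine h _ (isNewman_reverse hN) ?_
  rw [reverse_mul_of_domain, reverse_ofList]
  exact dvd_mul_right _ _

/-! ### Dividing out the lowest coefficient -/

/-- A polynomial with coefficients `0` and `1`. -/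
def Binary (L : ℤ[X]) : Prop := ∀ i, L.coeff i = 0 ∨ L.coeff i = 1

theorem Binary.divX {L : ℤ[X]} (hL : Binary L) : Binary L.divX := fun i => by
  rw [coeff_divX]; exact hL _

theorem Binary.norm_le {L : ℤ[X]} (hL : Binary L) {α : ℂ} (hα : ‖α‖ < 1) :
    ‖2 * (1 - α) * aeval α L - 1‖ * (1 - ‖α‖) ≤ ‖1 - α‖ := by
  suffices H : ∀ n (L : ℤ[X]), Binary L → (∀ i, n ≤ i → L.coeff i = 0) →
      ‖2 * (1 - α) * aeval α L - 1‖ * (1 - ‖α‖) ≤ ‖1 - α‖ from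
    H (L.natDegree + 1) L hL fun i hi => coeff_eq_zero_of_natDegree_lt hi
  intro n
  induction n with
  | zero =>
    intro L _ h
    have : L = 0 := by ext i; simpa using h i (Nat.zero_le i)
    have h1 : ‖(1 : ℂ)‖ - ‖α‖ ≤ ‖1 - α‖ := norm_sub_norm_le 1 α
    simpa [this] using h1
  | succ n ih =>
    intro L hL h
    have ih := ih L.divX hL.divX fun i hi => by rw [coeff_divX]; exact h _ (by omega)
    have hc : ‖(2 * (L.coeff 0 : ℂ) - 1) * (1 - α)‖ = ‖1 - α‖ := by
      rw [norm_mul]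
      rcases hL 0 with h | h <;> norm_num [h]
    have hrec : 2 * (1 - α) * aeval α L - 1 =
        α * (2 * (1 - α) * aeval α L.divX - 1) + (2 * (L.coeff 0 : ℂ) - 1) * (1 - α) := by
      conv_lhs => rw [← divX_mul_X_add L]
      simp only [map_add, map_mul, aeval_X, eq_intCast, map_intCast]
      ring
    have hn := norm_add_le (α * (2 * (1 - α) * aeval α L.divX - 1))
      ((2 * (L.coeff 0 : ℂ) - 1) * (1 - α))
    rw [← hrec, hc, norm_mul] at hn
    nlinarith [norm_nonneg α]

/-- The polynomial `T` can be completed to a multiple of `P` by a binary polynomial. -/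
def Alive (P T : ℤ[X]) : Prop := ∃ L, Binary L ∧ P ∣ T + L

theorem Alive.norm_le {P T : ℤ[X]} (h : Alive P T) {α : ℂ} (hα : ‖α‖ < 1) (hP : aeval α P = 0) :
    ‖2 * (1 - α) * aeval α T + 1‖ * (1 - ‖α‖) ≤ ‖1 - α‖ := by
  obtain ⟨L, hL, Q, hQ⟩ := h
  have h0 : aeval α T + aeval α L = 0 := by rw [← map_add, hQ, map_mul, hP, zero_mul]
  have : 2 * (1 - α) * aeval α T + 1 = -(2 * (1 - α) * aeval α L - 1) := by
    linear_combination 2 * (1 - α) * h0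
  rw [this, norm_neg]
  exact hL.norm_le hα

/-- The coefficients of `(s + c - (x + c) * p) / X`, where `x` is the head of `s` and
`p = 1 + X * q`. -/
def reduce (c : ℤ) (q : List ℤ) : List ℤ → List ℤ
  | [] => []
  | x :: l => List.zipWith (fun y z => y - (x + c) * z) (l ++ [0]) q

theorem ofList_zipWith (t : ℤ) {l q : List ℤ} (h : l.length = q.length) :
    ofList (List.zipWith (fun y z => y - t * z) l q) = ofList l - C t * ofList q := by
  induction l generalizing q with
  | nil =>
    obtain rfl : q = [] := List.length_eq_zero_iff.mp h.symm
    simp [ofList]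
  | cons a l ih =>
    cases q with
    | nil => simp at h
    | cons b q =>
      rw [List.zipWith_cons_cons, ofList, ofList, ofList, ih (by simpa using h)]
      simp only [C_sub, C_mul]
      ring

theorem dvd_reduce {q s : List ℤ} (h : s.length = q.length) (hs : s ≠ []) {L : ℤ[X]}
    (hd : ofList (1 :: q) ∣ ofList s + L) :
    ofList (1 :: q) ∣ ofList (reduce (L.coeff 0) q s) + L.divX := by
  cases s with
  | nil => exact absurd rfl hs
  | cons x l =>
    have hl : (l ++ [0]).length = q.length := by simpa using h
    have hP : ofList (1 :: q) = 1 + X * ofList q := by simp [ofList]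
    have hco : IsCoprime (ofList (1 :: q)) X := ⟨1, -ofList q, by rw [hP]; ring⟩
    refine hco.dvd_of_dvd_mul_left ?_
    have : X * (ofList (reduce (L.coeff 0) q (x :: l)) + L.divX) =
        ofList (x :: l) + L - C (x + L.coeff 0) * ofList (1 :: q) := by
      rw [reduce, ofList_zipWith _ hl, ofList_append, hP]
      conv_rhs => rw [← divX_mul_X_add L]
      simp only [ofList, C_add, C_0, coeff_add, coeff_mul_X_zero, coeff_C_zero, zero_add]
      ring
    rw [this]
    exact dvd_sub hd (dvd_mul_left _ _)

theorem length_reduce (c : ℤ) {q s : List ℤ} (h : s.length = q.length) :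
    (reduce c q s).length = s.length := by
  cases s with
  | nil => rfl
  | cons x l => simp [reduce] at h ⊢; omega

theorem abs_le_of_mem_zipWith {b : ℕ} {t : ℤ} (ht : |t| ≤ 16) {l q : List ℤ}
    (hl : ∀ y ∈ l, |y| ≤ b) (hq : ∀ z ∈ q, |z| = 1) :
    ∀ y ∈ List.zipWith (fun y z => y - t * z) l q, |y| ≤ (b + 16 : ℕ) := by
  induction l generalizing q with
  | nil => simp
  | cons a l ih =>
    cases q with
    | nil => simp
    | cons z q =>
      simp only [List.mem_cons, forall_eq_or_imp, List.zipWith_cons_cons] at hl hq ⊢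
      refine ⟨?_, ih hl.2 hq.2⟩
      have := abs_sub a (t * z)
      rw [abs_mul, hq.1] at this
      push_cast
      linarith [hl.1]

/-! ### Packed lists -/

/-- The number representing a list of integers. -/
def packed : List ℤ → ℤ
  | [] => 0
  | a :: l => a + 32768 + 65537 * packed l

/-- The value at `65537`. -/
def packedSigns : List ℤ → ℤ
  | [] => 0
  | a :: l => a + 65537 * packedSigns l

theorem packed_nonneg {l : List ℤ} (h : ∀ y ∈ l, |y| ≤ 32768) : 0 ≤ packed l := by
  induction l with
  | nil => exact le_rfl
  | cons a l ih =>
    simp only [List.mem_cons, forall_eq_or_imp] at h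
    have := ih h.2
    have := abs_le.mp h.1
    simp only [packed]
    omega

theorem packed_inj {l m : List ℤ} (h : l.length = m.length) (hl : ∀ y ∈ l, |y| ≤ 32768)
    (hm : ∀ y ∈ m, |y| ≤ 32768) (e : packed l = packed m) : l = m := by
  induction l generalizing m with
  | nil => exact (List.length_eq_zero_iff.mp h.symm).symm
  | cons a l ih =>
    cases m with
    | nil => simp at h
    | cons b m =>
      simp only [List.mem_cons, forall_eq_or_imp, packed] at hl hm e
      have h1 := abs_le.mp hl.1
      have h2 := abs_le.mp hm.1
      have hab : a = b := by omega
      rw [hab, ih (by simpa using h) hl.2 hm.2 (by omega)]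

theorem packed_zipWith (t : ℤ) {l q : List ℤ} (h : l.length = q.length) :
    packed (List.zipWith (fun y z => y - t * z) l q) = packed l - t * packedSigns q := by
  induction l generalizing q with
  | nil =>
    obtain rfl : q = [] := List.length_eq_zero_iff.mp h.symm
    simp [packed, packedSigns]
  | cons a l ih =>
    cases q with
    | nil => simp at h
    | cons b q =>
      rw [List.zipWith_cons_cons, packed, packed, packedSigns, ih (by simpa using h)]
      ring

theorem packed_append_zero (l : List ℤ) :
    packed (l ++ [0]) = packed l + 32768 * 65537 ^ l.length := by
  induction l with
  | nil => simp [packed]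
  | cons a l ih => simp only [List.cons_append, packed, ih, List.length_cons]; ring

theorem packedZero_eq (n : ℕ) : (packedZero n : ℤ) = packed (List.replicate n 0) := by
  induction n with
  | zero => rfl
  | succ n ih => simp [packedZero, List.replicate_succ, packed, ih]

/-- A list of signs. -/
def IsSigns (l : List ℤ) : Prop := ∀ z ∈ l, z = 1 ∨ z = -1

theorem IsSigns.abs_eq {l : List ℤ} (h : IsSigns l) : ∀ z ∈ l, |z| = 1 := fun z hz => by
  rcases h z hz with rfl | rfl <;> rfl

theorem packPos_sub_packNeg {l : List ℤ} (h : IsSigns l) :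
    (packPos l : ℤ) - packNeg l = packedSigns l := by
  induction l with
  | nil => rfl
  | cons a l ih =>
    have ih := ih fun z hz => h z (List.mem_cons_of_mem _ hz)
    rcases h a List.mem_cons_self with rfl | rfl
    · change ((1 + 65537 * packPos l : ℕ) : ℤ) - (65537 * packNeg l : ℕ) = 1 + 65537 * packedSigns l
      push_cast
      linarith
    · change ((65537 * packPos l : ℕ) : ℤ) - (1 + 65537 * packNeg l : ℕ) =
        -1 + 65537 * packedSigns l
      push_cast
      linarith

/-! ### Soundness of the search -/

@[simp] theorem force_eq {α : Type} (n : ℕ) (k : ℕ → α) : force n k = k n := by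
  cases n <;> rfl

theorem dist_le_iff {a b c : ℕ} : dist a b ≤ c ↔ |(a : ℤ) - b| ≤ c := by
  change (a - b) + (b - a) ≤ c ↔ _
  rw [abs_le]
  omega

/-- The number `n` represents the list `s` of length `d` with entries at most `b`. -/
def Packs (d b : ℕ) (s : List ℤ) (n : ℕ) : Prop :=
  s.length = d ∧ (∀ y ∈ s, |y| ≤ b) ∧ (n : ℤ) = packed s

theorem Packs.mono {d b b' n : ℕ} {s : List ℤ} (h : Packs d b s n) (hb : b ≤ b') :
    Packs d b' s n :=
  ⟨h.1, fun y hy => (h.2.1 y hy).trans (by exact_mod_cast hb), h.2.2⟩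

theorem Packs.head_tail {d b n : ℕ} {x : ℤ} {l : List ℤ} (h : Packs d b (x :: l) n)
    (hb : b ≤ 32768) : ((n % 65537 : ℕ) : ℤ) = x + 32768 ∧ ((n / 65537 : ℕ) : ℤ) = packed l := by
  obtain ⟨-, h1, h2⟩ := h
  have hx := abs_le.mp (h1 x List.mem_cons_self)
  rw [packed] at h2
  constructor <;> omega

theorem Packs.reduce {d b n : ℕ} {x : ℤ} {l q : List ℤ} (h : Packs d b (x :: l) n)
    (hq : IsSigns q) (hd : q.length = d) {c : ℤ} (hx : |x + c| ≤ 16) {m : ℕ}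
    (hm : (m : ℤ) = packed l + 32768 * 65537 ^ (d - 1) - (x + c) * packedSigns q) :
    Packs d (b + 16) (reduce c q (x :: l)) m := by
  obtain ⟨h1, h2, h3⟩ := h
  have hl : (l ++ [0]).length = q.length := by rw [hd, ← h1]; simp
  refine ⟨by rw [length_reduce c (h1.trans hd.symm), h1], ?_, ?_⟩
  · refine abs_le_of_mem_zipWith hx (fun y hy => ?_) hq.abs_eq
    rcases List.mem_append.mp hy with hy | hy
    · exact h2 y (List.mem_cons_of_mem _ hy)
    · simp [List.mem_singleton.mp hy]
  · rw [LittlewoodNewman.reduce, packed_zipWith _ hl, packed_append_zero, hm, ← h1]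
    simp

theorem memNat_iff {a : ℕ} {l : List ℕ} : memNat a l = true ↔ a ∈ l := by
  induction l with
  | nil => simp [memNat]
  | cons b l ih =>
    rw [List.mem_cons, ← ih]
    change (bif Nat.beq a b then true else memNat a l) = true ↔ _
    by_cases h : a = b
    · simp [h]
    · have : Nat.beq a b = false := Bool.eq_false_iff.mpr fun e => h (Nat.eq_of_beq_eq_true e)
      simp [this, h]

/-- The children of a packed list. -/
theorem Packs.child {d b n K P : ℕ} {s q : List ℤ} (h : Packs d b s n) (hs : s ≠ [])
    (hb : b + 16 ≤ 32768) (hq : IsSigns q) (hd : q.length = d) (hP : (P : ℤ) = packedSigns q)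
    (hK : K = 32768 * (P + 65537 ^ (d - 1))) (hn : dist (n % 65537) 32768 ≤ 15) :
    Packs d (b + 16) (LittlewoodNewman.reduce 0 q s) (child K P n) ∧
    Packs d (b + 16) (LittlewoodNewman.reduce 1 q s) (child K P n - P) := by
  cases s with
  | nil => exact absurd rfl hs
  | cons x l =>
    obtain ⟨h1, h2⟩ := h.head_tail (by omega)
    rw [dist_le_iff, h1, abs_le] at hn
    have hl : (l ++ [0]).length = q.length := by rw [hd, ← h.1]; simp
    have hll : l.length = d - 1 := by rw [← h.1]; simp
    have hnonneg : ∀ c : ℤ, |x + c| ≤ 16 →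
        0 ≤ packed l + 32768 * 65537 ^ (d - 1) - (x + c) * packedSigns q := by
      intro c hc
      rw [← hll, ← packed_append_zero, ← packed_zipWith _ hl]
      refine packed_nonneg fun y hy => (abs_le_of_mem_zipWith (b := b) hc ?_ hq.abs_eq y hy).trans
        (by exact_mod_cast hb)
      intro y hy
      rcases List.mem_append.mp hy with hy | hy
      · exact h.2.1 y (List.mem_cons_of_mem _ hy)
      · simp [List.mem_singleton.mp hy]
    have hx0 : |x + 0| ≤ 16 := abs_le.mpr (by push_cast at hn; constructor <;> linarith)
    have hx1 : |x + 1| ≤ 16 := abs_le.mpr (by push_cast at hn; constructor <;> linarith)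
    have h0 : (LittlewoodNewman.child K P n : ℤ) =
        packed l + 32768 * 65537 ^ (d - 1) - (x + 0) * packedSigns q := by
      have := hnonneg 0 hx0
      change ((n / 65537 + K - n % 65537 * P : ℕ) : ℤ) = _
      have hle : ((n / 65537 + K : ℕ) : ℤ) - (n % 65537 * P : ℕ) =
          packed l + 32768 * 65537 ^ (d - 1) - (x + 0) * packedSigns q := by
        rw [Nat.cast_add, h2, Nat.cast_mul, h1, hK, ← hP]
        push_cast
        ring
      rw [Nat.cast_sub (by omega), hle]
    refine ⟨h.reduce hq hd hx0 h0, h.reduce hq hd hx1 ?_⟩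
    have := hnonneg 1 hx1
    have hle : (LittlewoodNewman.child K P n : ℤ) - P =
        packed l + 32768 * 65537 ^ (d - 1) - (x + 1) * packedSigns q := by
      rw [h0, ← hP]; ring
    rw [Nat.cast_sub (by omega), hle]

theorem explore_sound {o K P d : ℕ} {q : List ℤ} {dead : ℕ → Bool} (hd0 : d ≠ 0)
    (hq : IsSigns q) (hd : q.length = d) (hP : (P : ℤ) = packedSigns q)
    (hK : K = 32768 * (P + 65537 ^ (d - 1))) (n : ℕ) (stack visited : List ℕ) (b : ℕ)
    (hb : b + 16 * n ≤ 16000) (hstack : ∀ m ∈ stack, ∃ s, Packs d b s m)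
    (hvisited : ∀ m ∈ visited, ∃ s, Packs d b s m)
    (h : explore o K P dead n stack visited = true) :
    ∃ W : Set ℕ, (∀ m ∈ stack, m ∈ W) ∧ (∀ m ∈ visited, m ∈ W) ∧
      (∀ m ∈ W, ∃ s, Packs d 16000 s m) ∧
      ∀ m ∈ W, m ∈ visited ∨ dead m = true ∨
        (m ≠ o ∧ dist (m % 65537) 32768 ≤ 15 ∧ child K P m ∈ W ∧ child K P m - P ∈ W) := by
  induction n generalizing stack visited b with
  | zero => simp [explore] at h
  | succ n ih =>
    cases stack with
    | nil =>
      refine ⟨{m | m ∈ visited}, by simp, fun m hm => hm, fun m hm => ?_, fun m hm => .inl hm⟩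
      obtain ⟨s, hs⟩ := hvisited m hm
      exact ⟨s, hs.mono (by omega)⟩
    | cons s stack =>
      have hmono : ∀ m, (∃ s, Packs d b s m) → ∃ s, Packs d (b + 16) s m :=
        fun m ⟨s, hs⟩ => ⟨s, hs.mono (by omega)⟩
      simp only [List.mem_cons, forall_eq_or_imp] at hstack
      obtain ⟨⟨l, hl⟩, hstack⟩ := hstack
      simp only [explore, force_eq, cond_eq_ite] at h
      split_ifs at h with hdead hmem hzero
      · obtain ⟨W, h1, h2, h3, h4⟩ := ih stack visited b (by omega) hstack hvisited h
        refine ⟨insert s W, ?_, fun m hm => Or.inr (h2 m hm), ?_, ?_⟩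
        · simp only [List.mem_cons, forall_eq_or_imp]
          exact ⟨Or.inl rfl, fun m hm => Or.inr (h1 m hm)⟩
        · rintro m (rfl | hm)
          · exact ⟨l, hl.mono (by omega)⟩
          · exact h3 m hm
        · rintro m (rfl | hm)
          · exact .inr (.inl hdead)
          · rcases h4 m hm with h | h | ⟨h, h', h'', h'''⟩
            · exact .inl h
            · exact .inr (.inl h)
            · exact .inr (.inr ⟨h, h', .inr h'', .inr h'''⟩)
      · obtain ⟨W, h1, h2, h3, h4⟩ := ih stack visited b (by omega) hstack hvisited h
        refine ⟨W, ?_, h2, h3, h4⟩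
        simp only [List.mem_cons, forall_eq_or_imp]
        exact ⟨h2 s (memNat_iff.mp hmem), h1⟩
      · rw [Bool.and_eq_true, Nat.ble_eq] at h
        obtain ⟨hdist, h⟩ := h
        have hne : l ≠ [] := by
          rintro rfl
          exact hd0 hl.1.symm
        obtain ⟨c0, c1⟩ := hl.child hne (by omega) hq hd hP hK hdist
        obtain ⟨W, h1, h2, h3, h4⟩ := ih _ (s :: visited) (b + 16) (by omega)
          (by
            simp only [List.mem_cons, forall_eq_or_imp]
            exact ⟨⟨_, c0⟩, ⟨_, c1⟩, fun m hm => hmono m (hstack m hm)⟩)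
          (by
            simp only [List.mem_cons, forall_eq_or_imp]
            exact ⟨⟨_, hl.mono (by omega)⟩, fun m hm => hmono m (hvisited m hm)⟩) h
        simp only [List.mem_cons, forall_eq_or_imp] at h1 h2 h4 ⊢
        refine ⟨W, ⟨h2.1, h1.2.2⟩, h2.2, h3, fun m hm => ?_⟩
        rcases h4 m hm with (rfl | h) | h | h
        · refine .inr (.inr ⟨?_, hdist, h1.1, h1.2.1⟩)
          rintro rfl
          exact hzero (Nat.beq_refl m)
        · exact .inl h
        · exact .inr (.inl h)
        · exact .inr (.inr h)

theorem noNewmanMultiple_of_explore {d : ℕ} {q : List ℤ} {dead : ℕ → Bool} (hd0 : d ≠ 0)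
    (hq : IsSigns q) (hd : q.length = d) (hmonic : (ofList (1 :: q)).Monic)
    (hdeg : (ofList (1 :: q)).natDegree = d) {P : ℕ} (hP : (P : ℤ) = packedSigns q)
    (hdead : ∀ s n, Packs d 16000 s n → dead n = true → ¬Alive (ofList (1 :: q)) (ofList s))
    (h : explore (packedZero d) (32768 * (P + 65537 ^ (d - 1))) P dead 950
      [packedZero d - P] [] = true) :
    NoNewmanMultiple (ofList (1 :: q)) := by
  have hz : Packs d 0 (List.replicate d 0) (packedZero d) :=
    ⟨by simp, by simp, packedZero_eq d⟩
  have hne : List.replicate d (0 : ℤ) ≠ [] := by simpa using hd0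
  obtain ⟨m, rfl⟩ := Nat.exists_eq_succ_of_ne_zero hd0
  have hstart : Packs (m + 1) 16 (reduce 1 q (List.replicate (m + 1) 0)) (packedZero (m + 1) - P) := by
    rw [List.replicate_succ] at hz hne ⊢
    have e : packed (List.replicate m 0) + 32768 * 65537 ^ m =
        packed (List.replicate m 0 ++ [0]) := by
      rw [packed_append_zero, List.length_replicate]
    have hl : (List.replicate m (0 : ℤ) ++ [0]).length = q.length := by simp [hd]
    have h1 : |(1 : ℤ)| ≤ 16 := by norm_num
    have hle : (packedZero (m + 1) : ℤ) - P =
        packed (List.replicate m 0) + 32768 * 65537 ^ (m + 1 - 1) - (0 + 1) * packedSigns q := by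
      rw [Nat.add_sub_cancel, e, ← List.replicate_succ', packedZero_eq, hP]
      ring
    have hnonneg : 0 ≤ (packedZero (m + 1) : ℤ) - P := by
      rw [hle, Nat.add_sub_cancel, e, zero_add, ← packed_zipWith _ hl]
      refine packed_nonneg fun y hy =>
        (abs_le_of_mem_zipWith (b := 0) h1 ?_ hq.abs_eq y hy).trans (by norm_num)
      rw [← List.replicate_succ']
      simp
    refine hz.reduce hq hd (by norm_num) ?_
    rw [Nat.cast_sub (by omega), hle]
  obtain ⟨W, hW, -, hWp, hWc⟩ := explore_sound hd0 hq hd hP rfl 950 _ [] 16 (by norm_num)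
    (by simpa using ⟨_, hstart⟩) (by simp) h
  have key : ∀ n (L : ℤ[X]), Binary L → (∀ i, n ≤ i → L.coeff i = 0) → ∀ a ∈ W, ∀ s,
      Packs (m + 1) 16000 s a → ¬ofList (1 :: q) ∣ ofList s + L := by
    intro n
    induction n with
    | zero =>
      intro L hL hn a ha s hs hdvd
      rcases hWc a ha with h | h | ⟨h, -⟩
      · simp at h
      · exact hdead s a hs h ⟨L, hL, hdvd⟩
      · have hL0 : L = 0 := by ext i; simpa using hn i (Nat.zero_le i)
        rw [hL0, add_zero] at hdvd
        have := eq_replicate_zero_of_dvd hmonic (by rw [hdeg, hs.1]) hdvd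
        apply h
        have h2 := hs.2.2
        rw [this, hs.1, ← packedZero_eq] at h2
        exact_mod_cast h2
    | succ n ih =>
      intro L hL hn a ha s hs hdvd
      rcases hWc a ha with h | h | ⟨-, h, h0, h1⟩
      · simp at h
      · exact hdead s a hs h ⟨L, hL, hdvd⟩
      · have hsne : s ≠ [] := by
          rintro rfl
          exact hd0 hs.1.symm
        obtain ⟨c0, c1⟩ := hs.child hsne (by norm_num) hq hd hP rfl h
        have hdvd := dvd_reduce (hs.1.trans hd.symm) hsne hdvd
        have ih := ih L.divX hL.divX fun i hi => by rw [coeff_divX]; exact hn _ (by omega)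
        have hfin : ∀ c a', a' ∈ W → Packs (m + 1) (16000 + 16) (reduce c q s) a' →
            ¬ofList (1 :: q) ∣ ofList (reduce c q s) + L.divX := by
          intro c a' ha' hc
          obtain ⟨s', hs'⟩ := hWp a' ha'
          have : s' = reduce c q s := packed_inj (hs'.1.trans hc.1.symm)
            (fun y hy => (hs'.2.1 y hy).trans (by norm_num))
            (fun y hy => (hc.2.1 y hy).trans (by norm_num)) (hs'.2.2.symm.trans hc.2.2)
          exact this ▸ ih a' ha' s' hs'
        rcases hL 0 with hc | hc <;> rw [hc] at hdvd
        · exact hfin 0 _ h0 c0 hdvd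
        · exact hfin 1 _ h1 c1 hdvd
  intro N hN hdvd
  have h1 := dvd_reduce (q := q) (s := List.replicate (m + 1) 0) (L := N) (by simp [hd]) hne
    (by rwa [ofList_replicate_zero, zero_add])
  rw [hN.1] at h1
  have hb : Binary N := hN.2
  exact key _ N.divX hb.divX (fun i hi => coeff_eq_zero_of_natDegree_lt hi) _
    (hW _ List.mem_cons_self) _ (hstart.mono (by norm_num)) h1

/-! ### Gaussian integers modulo `M` -/

/-- The residue `n` modulo `M = J * J + 1` represents the Gaussian integer `γ`. -/
def Represents (J M n : ℕ) (γ : ℂ) : Prop :=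
  ∃ a b : ℤ, γ = a + b * Complex.I ∧ (n : ZMod M) = a + b * J

section Represents

variable {J H M m n : ℕ} {γ δ : ℂ}

theorem Represents.natCast (n : ℕ) : Represents J M n n := ⟨n, 0, by simp, by simp⟩

theorem Represents.add (hm : Represents J M m γ) (hn : Represents J M n δ) :
    Represents J M (m + n) (γ + δ) := by
  obtain ⟨a, b, h1, h2⟩ := hm
  obtain ⟨a', b', h3, h4⟩ := hn
  refine ⟨a + a', b + b', ?_, ?_⟩
  · rw [h1, h3]; push_cast; ring
  · push_cast; rw [h2, h4]; ring

theorem Represents.mul (hM : M = J * J + 1) (hm : Represents J M m γ) (hn : Represents J M n δ) :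
    Represents J M (m * n) (γ * δ) := by
  obtain ⟨a, b, h1, h2⟩ := hm
  obtain ⟨a', b', h3, h4⟩ := hn
  have hJ : (J * J + 1 : ZMod M) = 0 := by
    have : ((J * J + 1 : ℕ) : ZMod M) = 0 := (ZMod.natCast_eq_zero_iff _ _).mpr hM.dvd
    exact_mod_cast this
  refine ⟨a * a' - b * b', a * b' + b * a', ?_, ?_⟩
  · rw [h1, h3]
    push_cast
    linear_combination (b * b' : ℂ) * Complex.I_mul_I
  · push_cast
    rw [h2, h4]
    linear_combination (b * b' : ZMod M) * hJ

theorem Represents.mod (h : Represents J M n γ) : Represents J M (n % M) γ := by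
  obtain ⟨a, b, h1, h2⟩ := h
  exact ⟨a, b, h1, by rw [ZMod.natCast_mod, h2]⟩

theorem Represents.pred (hM : M = J * J + 1) : Represents J M M.pred (-1) := by
  refine ⟨-1, 0, by simp, ?_⟩
  have h : (M.pred : ZMod M) + 1 = 0 := by
    have : ((M.pred + 1 : ℕ) : ZMod M) = 0 :=
      (ZMod.natCast_eq_zero_iff _ _).mpr (by rw [hM]; exact dvd_rfl)
    exact_mod_cast this
  push_cast
  linear_combination h

theorem normOf_eq (J H M r : ℕ) : normOf J H M r =
    dist ((r + (H + H * J)) % M % J) H ^ 2 + dist ((r + (H + H * J)) % M / J) H ^ 2 := by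
  simp only [normOf, sq, force_eq, pow_two]
  rfl

theorem cast_dist_sq (a b : ℕ) : ((dist a b ^ 2 : ℕ) : ℤ) = ((a : ℤ) - b) ^ 2 := by
  change (((a - b) + (b - a)) ^ 2 : ℕ) = ((a : ℤ) - b) ^ 2
  rcases le_total a b with h | h
  · rw [Nat.sub_eq_zero_of_le h, zero_add]
    push_cast [h]
    ring
  · rw [Nat.sub_eq_zero_of_le h, add_zero]
    push_cast [h]
    ring

theorem norm_sq_intCast_add (a b : ℤ) :
    ‖(a + b * Complex.I : ℂ)‖ ^ 2 = ((a ^ 2 + b ^ 2 : ℤ) : ℝ) := by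
  rw [← Complex.normSq_eq_norm_sq]
  have := Complex.normSq_add_mul_I (a : ℝ) (b : ℝ)
  push_cast at this ⊢
  exact this

theorem exists_represents (n : ℕ) :
    ∃ γ, Represents J M n γ ∧ (normOf J H M n : ℝ) = ‖γ‖ ^ 2 := by
  set r := (n + (H + H * J)) % M with hr
  refine ⟨_, ⟨((r % J : ℕ) : ℤ) - H, ((r / J : ℕ) : ℤ) - H, rfl, ?_⟩, ?_⟩
  · have h1 : ((r : ℕ) : ZMod M) = (r % J : ℕ) + J * (r / J : ℕ) := by
      conv_lhs => rw [← Nat.mod_add_div r J]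
      push_cast
      ring
    have h2 : ((r : ℕ) : ZMod M) = n + (H + H * J) := by
      rw [hr, ZMod.natCast_mod]
      push_cast
      ring
    rw [Int.cast_sub, Int.cast_sub, Int.cast_natCast, Int.cast_natCast, Int.cast_natCast]
    linear_combination h1 - h2
  · rw [norm_sq_intCast_add, normOf_eq, ← hr]
    rw [← cast_dist_sq, ← cast_dist_sq]
    norm_cast

theorem Represents.normOf_eq (hM : M = J * J + 1) (hH : J = 2 * H) (h : Represents J M n γ)
    (hγ : ‖γ‖ < H) : (normOf J H M n : ℝ) = ‖γ‖ ^ 2 := by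
  obtain ⟨a, b, rfl, h⟩ := h
  have hnorm := norm_sq_intCast_add a b
  have hlt : ((a ^ 2 + b ^ 2 : ℤ) : ℝ) < ((H ^ 2 : ℤ) : ℝ) := by
    rw [← hnorm]
    push_cast
    gcongr
  have hlt : a ^ 2 + b ^ 2 < (H : ℤ) ^ 2 := by exact_mod_cast hlt
  have ha := abs_lt.mp (abs_lt_of_sq_lt_sq (show a ^ 2 < (H : ℤ) ^ 2 by nlinarith) (by simp))
  have hb := abs_lt.mp (abs_lt_of_sq_lt_sq (show b ^ 2 < (H : ℤ) ^ 2 by nlinarith) (by simp))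
  lift a + H to ℕ using by omega with u hu
  lift b + H to ℕ using by omega with v hv
  have hu' : u < J := by omega
  have hv' : v < J := by omega
  have hr : (n + (H + H * J)) % M = u + J * v := by
    have hM' : u + J * v < M := by
      rw [hM]
      nlinarith
    rw [← Nat.mod_eq_of_lt hM']
    refine (ZMod.natCast_eq_natCast_iff' _ _ _).mp ?_
    push_cast
    have e1 : (u : ZMod M) = a + H := by exact_mod_cast congrArg (Int.cast : ℤ → ZMod M) hu
    have e2 : (v : ZMod M) = b + H := by exact_mod_cast congrArg (Int.cast : ℤ → ZMod M) hv
    rw [h, e1, e2]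
    ring
  rw [hnorm, LittlewoodNewman.normOf_eq, hr, Nat.add_mul_mod_self_left, Nat.mod_eq_of_lt hu',
    Nat.add_mul_div_left _ _ (by omega), Nat.div_eq_of_lt hu', zero_add]
  have e1 := cast_dist_sq u H
  have e2 := cast_dist_sq v H
  rw [hu, add_sub_cancel_right] at e1
  rw [hv, add_sub_cancel_right] at e2
  rw [← e1, ← e2]
  norm_cast

end Represents

/-! ### Evaluation at Gaussian rationals -/

/-- The residues of `D ^ (n - 1 - i) * x * z ^ i` modulo `M` for `i < n`. -/
def weights (D M z : ℕ) : ℕ → ℕ → List ℕ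
  | 0, _ => []
  | n + 1, x => x * D ^ n % M :: weights D M z n (x * z % M)

theorem withWeights_eq {α : Type} (D M z n x : ℕ) (k : List ℕ → α) :
    withWeights D M z n x k = k (weights D M z n x) := by
  induction n generalizing x k with
  | zero => rfl
  | succ n ih => simp only [withWeights, force_eq, ih]; rfl

/-- The list with entries `(k + e * i) * s i`. -/
def scaled (e : ℕ) : ℕ → List ℤ → List ℤ
  | _, [] => []
  | k, a :: l => k * a :: scaled e (k + e) l

theorem scaled_zero_one (s : List ℤ) : scaled 0 1 s = s := by
  induction s with
  | nil => rfl
  | cons a l ih => simp [scaled, ih]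

theorem ofList_scaled (k : ℕ) (s : List ℤ) :
    ofList (scaled 1 k s) = C (k : ℤ) * ofList s + X * derivative (ofList s) := by
  induction s generalizing k with
  | nil => simp [scaled, ofList]
  | cons a l ih =>
    simp only [scaled, ofList, ih, derivative_add, derivative_C, derivative_mul, derivative_X,
      Nat.cast_add, C_add, C_mul, Nat.cast_one, C_1]
    ring

theorem ofList_scaled_one (a : ℤ) (s : List ℤ) :
    ofList (scaled 1 1 s) = derivative (ofList (a :: s)) := by
  rw [ofList_scaled, ofList]
  simp

theorem length_scaled (e k : ℕ) (s : List ℤ) : (scaled e k s).length = s.length := by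
  induction s generalizing k with
  | nil => rfl
  | cons a l ih => simp [scaled, ih]

theorem abs_le_of_mem_scaled (k : ℕ) {s : List ℤ} (hs : IsSigns s) :
    ∀ y ∈ scaled 1 k s, |y| ≤ (k + s.length : ℕ) := by
  induction s generalizing k with
  | nil => simp [scaled]
  | cons a l ih =>
    simp only [scaled, List.mem_cons, forall_eq_or_imp]
    refine ⟨?_, fun y hy => (ih (k + 1) (fun z hz => hs z (List.mem_cons_of_mem _ hz)) y hy).trans
      (by simp; omega)⟩
    rw [abs_mul, hs.abs_eq a List.mem_cons_self, Nat.abs_cast]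
    push_cast
    omega

section Evaluation

variable {D J M z : ℕ} {w : ℂ}

theorem represents_dot (hM : M = J * J + 1) (hz : Represents J M z (D * w)) (e : ℕ) {s : List ℤ}
    (hs : IsSigns s) (k : ℕ) {x : ℕ} {ξ : ℂ} (hx : Represents J M x ξ) {n : ℕ} (hn : s.length ≤ n) :
    ∃ γ, Represents J M (dot e k (residues M s) (weights D M z n x)) γ ∧
      D * γ = ξ * D ^ n * aeval w (ofList (scaled e k s)) := by
  induction s generalizing k x ξ n with
  | nil =>
    refine ⟨0, ?_, by simp [scaled, ofList]⟩
    simpa [residues, dot] using Represents.natCast (J := J) (M := M) 0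
  | cons a l ih =>
    cases n with
    | zero => simp at hn
    | succ n =>
      obtain ⟨γ, h1, h2⟩ := ih (fun z hz => hs z (List.mem_cons_of_mem _ hz)) (k + e)
        (hx.mul hM hz).mod (n := n) (by simpa using hn)
      obtain ⟨b, hb, hres⟩ : ∃ b, Represents J M b a ∧ residues M (a :: l) = b :: residues M l := by
        rcases hs a List.mem_cons_self with rfl | rfl
        · exact ⟨1, by simpa using Represents.natCast (J := J) (M := M) 1, rfl⟩
        · exact ⟨M.pred, by simpa using Represents.pred hM, rfl⟩
      refine ⟨k * (a * (ξ * (D ^ n : ℕ))) + γ, ?_, ?_⟩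
      · rw [hres]
        exact ((Represents.natCast k).mul hM (hb.mul hM (hx.mul hM (Represents.natCast _)).mod)).add h1
      · rw [mul_add, h2, scaled, ofList]
        simp only [map_add, map_mul, aeval_X, eq_intCast, map_intCast]
        push_cast
        ring

theorem represents_packedDot (hM : M = J * J + 1) (hz : Represents J M z (D * w)) {s : List ℤ}
    (hs : ∀ y ∈ s, |y| ≤ 32768) {x : ℕ} {ξ : ℂ} (hx : Represents J M x ξ) {N : ℕ}
    (hN : (N : ℤ) = packed s) :
    ∃ γ, Represents J M (packedDot (weights D M z s.length x) N) γ ∧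
      D * γ = ξ * D ^ s.length *
        aeval w (ofList s + ofList (List.replicate s.length 32768)) := by
  induction s generalizing x ξ N with
  | nil =>
    refine ⟨0, ?_, by simp [ofList]⟩
    simpa [weights, packedDot] using Represents.natCast (J := J) (M := M) 0
  | cons a l ih =>
    simp only [List.mem_cons, forall_eq_or_imp] at hs
    have ha := abs_le.mp hs.1
    rw [packed] at hN
    have hmod : ((N % 65537 : ℕ) : ℤ) = a + 32768 := by omega
    obtain ⟨γ, h1, h2⟩ := ih hs.2 (hx.mul hM hz).mod (N := N / 65537) (by omega)
    refine ⟨(N % 65537 : ℕ) * (ξ * (D ^ l.length : ℕ)) + γ, ?_, ?_⟩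
    · simp only [List.length_cons, weights, packedDot, force_eq]
      exact ((Represents.natCast _).mul hM (hx.mul hM (Represents.natCast _)).mod).add h1
    · have hc : ((N % 65537 : ℕ) : ℂ) = a + 32768 := by
        have := congrArg (Int.cast : ℤ → ℂ) hmod
        rwa [Int.cast_natCast, Int.cast_add, Int.cast_ofNat] at this
      rw [mul_add, h2, hc, List.length_cons, List.replicate_succ, ofList, ofList]
      simp only [map_add, map_mul, aeval_X, eq_intCast, map_intCast]
      push_cast
      ring

end Evaluation

/-! ### Soundness of the rejection test -/

theorem exists_root_near {P : ℤ[X]} (hP : P.Monic) {d : ℕ} (hd : P.natDegree = d) (hd0 : d ≠ 0)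
    {w : ℂ} {ε : ℝ} (hε : 0 < ε) (h : d * ‖aeval w P‖ ≤ ε * ‖aeval w (derivative P)‖) :
    ∃ α : ℂ, aeval α P = 0 ∧ ‖α - w‖ ≤ ε := by
  set p : ℂ[X] := P.map (Int.castRingHom ℂ) with hp
  have heval : ∀ Q : ℤ[X], ∀ x : ℂ, (Q.map (Int.castRingHom ℂ)).eval x = aeval x Q := fun Q x => by
    simp [aeval_def, eval₂_eq_eval_map]
  by_cases hw : aeval w P = 0
  · exact ⟨w, hw, by simpa using hε.le⟩
  by_contra! hfar
  have hp0 : p ≠ 0 := (hP.map _).ne_zero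
  have hcard : p.roots.card = d := by
    rw [← hd, ← hP.natDegree_map (Int.castRingHom ℂ)]
    exact (splits_iff_card_roots.mp (IsAlgClosed.splits p))
  have hsum := (IsAlgClosed.splits p).eval_derivative_div_eval_of_ne_zero (x := w)
    (by rwa [heval])
  rw [hp, derivative_map, heval, heval, ← hp] at hsum
  have hterm : ∀ α ∈ p.roots, ‖1 / (w - α)‖ < ε⁻¹ := by
    intro α hα
    have hα : aeval α P = 0 := by rw [← heval]; exact (mem_roots hp0).mp hα
    rw [norm_div, norm_one, one_div, norm_sub_rev]
    exact inv_strictAnti₀ hε (hfar α hα)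
  have hlt : ‖(p.roots.map fun z => 1 / (w - z)).sum‖ < d * ε⁻¹ := by
    refine (norm_multiset_sum_le _).trans_lt ?_
    rw [Multiset.map_map]
    have hne : p.roots ≠ 0 := by
      rw [← Multiset.card_pos, hcard]
      exact Nat.pos_of_ne_zero hd0
    have := Multiset.sum_lt_sum_of_nonempty hne hterm
    simpa [hcard] using this
  rw [← hsum, norm_div, div_lt_iff₀ (norm_pos_iff.mpr hw)] at hlt
  have : ε * ‖aeval w (derivative P)‖ < d * ‖aeval w P‖ := by
    calc _ < ε * (d * ε⁻¹ * ‖aeval w P‖) := by gcongr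
      _ = _ := by field_simp
  linarith

theorem norm_aeval_ofList_le {b : ℕ} {s : List ℤ} (hs : ∀ y ∈ s, |y| ≤ b) {w : ℂ} (hw : ‖w‖ ≤ 1) :
    ‖aeval w (ofList s)‖ ≤ b * s.length := by
  induction s with
  | nil => simp [ofList]
  | cons a l ih =>
    simp only [List.mem_cons, forall_eq_or_imp] at hs
    simp only [ofList, map_add, map_mul, aeval_X, eq_intCast, map_intCast, List.length_cons,
      Nat.cast_add, Nat.cast_one]
    have ha : ‖(a : ℂ)‖ ≤ b := by
      rw [Complex.norm_intCast]
      exact_mod_cast hs.1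
    have := norm_add_le (a : ℂ) (w * aeval w (ofList l))
    rw [norm_mul] at this
    nlinarith [ih hs.2, norm_nonneg (aeval w (ofList l)), norm_nonneg w]

theorem norm_aeval_ofList_sub_le {b : ℕ} {s : List ℤ} (hs : ∀ y ∈ s, |y| ≤ b) {α w : ℂ}
    (hα : ‖α‖ ≤ 1) (hw : ‖w‖ ≤ 1) :
    ‖aeval α (ofList s) - aeval w (ofList s)‖ ≤ b * s.length ^ 2 * ‖α - w‖ := by
  induction s with
  | nil => simp [ofList]
  | cons a l ih =>
    simp only [List.mem_cons, forall_eq_or_imp] at hs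
    have h1 := ih hs.2
    have h2 := norm_aeval_ofList_le hs.2 hw
    simp only [ofList, map_add, map_mul, aeval_X, eq_intCast, map_intCast, List.length_cons,
      Nat.cast_add, Nat.cast_one]
    set A := aeval α (ofList l)
    set B := aeval w (ofList l)
    have e : (a : ℂ) + α * A - (a + w * B) = α * (A - B) + (α - w) * B := by ring
    rw [e]
    have h3 : ‖α * (A - B)‖ ≤ ‖A - B‖ := by
      rw [norm_mul]
      exact mul_le_of_le_one_left (norm_nonneg _) hα
    have h4 : ‖(α - w) * B‖ ≤ ‖α - w‖ * (b * l.length) := by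
      rw [norm_mul]
      gcongr
    have h5 := norm_add_le (α * (A - B)) ((α - w) * B)
    have h6 : 0 ≤ (b : ℝ) * (l.length + 1) * ‖α - w‖ := by positivity
    nlinarith

theorem withTest_sound {D J H M d z : ℕ} (hM : M = J * J + 1) (hH : J = 2 * H) {l : List ℤ}
    (hl : IsSigns l) (hd : l.length = d) (hd0 : d ≠ 0) (hmonic : (ofList (1 :: l)).Monic)
    (hdeg : (ofList (1 :: l)).natDegree = d) {k : (ℕ → Bool) → Bool}
    (h : withTest D J H M (1 :: l) d z k = true) :
    (∃ α : ℂ, aeval α (ofList (1 :: l)) = 0 ∧ ‖α‖ < 1) ∧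
    ∃ f, k f = true ∧ ∀ s N, Packs d 16000 s N → f N = true →
      ¬Alive (ofList (1 :: l)) (ofList s) := by
  simp only [withTest, force_eq, withWeights_eq, Bool.and_eq_true, Nat.ble_eq, sq] at h
  set y := Nat.mod (Nat.add D (Nat.mul (Nat.pred M) z)) M with hy
  set r := approxSqrt (normOf J H M z) 7 D
  set t := approxSqrt (normOf J H M y) 7 D
  set q := Nat.sub D (Nat.add r 16) with hq
  set b := Nat.mul (Nat.pow D d) (Nat.add (Nat.mul D (Nat.add t 16))
    (Nat.mul q (Nat.mul 1536000 (Nat.mul d d)))) with hb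
  obtain ⟨⟨⟨⟨hr, ht⟩, hq1⟩, hbH⟩, hroot, hk⟩ := h
  have hqD : q + r + 16 = D := by
    have : q = D - (r + 16) := hq
    omega
  have hD : (0 : ℝ) < D := by exact_mod_cast (show 0 < D by omega)
  have hDC : (D : ℂ) ≠ 0 := by exact_mod_cast hD.ne'
  have hd1 : (1 : ℝ) ≤ d := by exact_mod_cast Nat.one_le_iff_ne_zero.mpr hd0
  have hqR : (q : ℝ) + r + 16 = D := by exact_mod_cast hqD
  have hq1R : (1 : ℝ) ≤ q := by exact_mod_cast hq1
  have hbR : (b : ℝ) = D ^ d * (D * (t + 16) + q * (1536000 * d ^ 2)) := by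
    have : b = D ^ d * (D * (t + 16) + q * (1536000 * (d * d))) := hb
    rw [this]
    push_cast
    ring
  have hbHR : (b : ℝ) < H := by exact_mod_cast hbH
  have hDd : (1 : ℝ) ≤ D ^ d := one_le_pow₀ (by linarith [Nat.cast_nonneg (α := ℝ) r])
  have hqd : (1536000 * d ^ 2 : ℝ) ≤ q * (1536000 * d ^ 2) :=
    le_mul_of_one_le_left (by positivity) hq1R
  obtain ⟨ζ, hz, hzn⟩ := exists_represents (J := J) (H := H) (M := M) z
  obtain ⟨w, rfl⟩ : ∃ w : ℂ, ζ = D * w := ⟨ζ / D, by field_simp⟩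
  have hr0 : (0 : ℝ) ≤ r := Nat.cast_nonneg r
  have ht0 : (0 : ℝ) ≤ t := Nat.cast_nonneg t
  have hw : D * ‖w‖ ≤ r := by
    have hle : (normOf J H M z : ℝ) ≤ (r : ℝ) * r := by exact_mod_cast hr
    rw [hzn, norm_mul, Complex.norm_natCast] at hle
    exact le_of_sq_le_sq (by linarith) hr0
  have hw1 : ‖w‖ ≤ 1 := by nlinarith
  have hyrep : Represents J M y (D * (1 - w)) := by
    have e : (D : ℂ) * (1 - w) = D + -1 * (D * w) := by ring
    rw [e]
    exact ((Represents.natCast D).add ((Represents.pred hM).mul hM hz)).mod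
  have hDH : 2 * (D : ℝ) < H := by
    refine lt_of_le_of_lt ?_ hbHR
    rw [hbR]
    have : 2 * (D : ℝ) ≤ D * (t + 16) + q * (1536000 * d ^ 2) := by nlinarith
    nlinarith
  have h1w : D * ‖1 - w‖ ≤ t := by
    have hnorm : ‖(D : ℂ) * (1 - w)‖ = D * ‖1 - w‖ := by rw [norm_mul, Complex.norm_natCast]
    have h1w : ‖1 - w‖ ≤ 2 := (norm_sub_le _ _).trans (by rw [norm_one]; linarith)
    have e := hyrep.normOf_eq hM hH (by rw [hnorm]; nlinarith)
    have hle : (normOf J H M y : ℝ) ≤ (t : ℝ) * t := by exact_mod_cast ht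
    rw [e, hnorm] at hle
    exact le_of_sq_le_sq (by linarith) ht0
  -- the root near `w`
  have hp : IsSigns (1 :: l) := by
    simpa [IsSigns] using hl
  have hx1 : Represents J M 1 1 := by simpa using Represents.natCast (J := J) (M := M) 1
  obtain ⟨A, hA, hAe⟩ := represents_dot hM hz 0 hp 1 hx1 (n := d + 1) (by simp [hd])
  obtain ⟨A', hA', hAe'⟩ := represents_dot hM hz 1 hl 1 hx1 (n := d + 1) (by omega)
  rw [scaled_zero_one, one_mul, pow_succ', mul_assoc] at hAe
  rw [ofList_scaled_one 1, one_mul, pow_succ', mul_assoc] at hAe'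
  have hAe := mul_left_cancel₀ hDC hAe
  have hAe' := mul_left_cancel₀ hDC hAe'
  have hAn : ‖A‖ = D ^ d * ‖aeval w (ofList (1 :: l))‖ := by
    rw [hAe, norm_mul, norm_pow, Complex.norm_natCast]
  have hAn' : ‖A'‖ = D ^ d * ‖aeval w (derivative (ofList (1 :: l)))‖ := by
    rw [hAe', norm_mul, norm_pow, Complex.norm_natCast]
  have hAlt : ‖A‖ < H := by
    have : ‖aeval w (ofList (1 :: l))‖ ≤ (1 : ℕ) * ((1 :: l).length : ℕ) :=
      norm_aeval_ofList_le (fun y hy => (hp.abs_eq y hy).le) hw1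
    rw [List.length_cons, hd] at this
    push_cast at this
    refine lt_of_le_of_lt ?_ hbHR
    rw [hAn, hbR]
    gcongr
    nlinarith
  have hAlt' : ‖A'‖ < H := by
    have := norm_aeval_ofList_le (abs_le_of_mem_scaled 1 hl) hw1
    rw [length_scaled, hd, ofList_scaled_one 1] at this
    push_cast at this
    refine lt_of_le_of_lt ?_ hbHR
    rw [hAn', hbR]
    gcongr
    nlinarith
  obtain ⟨α, hα0, hα⟩ : ∃ α : ℂ, aeval α (ofList (1 :: l)) = 0 ∧ ‖α - w‖ ≤ 16 / D := by
    refine exists_root_near hmonic hdeg hd0 (by positivity) ?_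
    have hle : ((d : ℝ) * D * (d * D)) * normOf J H M (dot 0 1 (residues M (1 :: l))
        (weights D M z (d + 1) 1)) ≤ 256 * normOf J H M (dot 1 1 (residues M l)
        (weights D M z (d + 1) 1)) := by exact_mod_cast hroot
    rw [hA.normOf_eq hM hH hAlt, hA'.normOf_eq hM hH hAlt'] at hle
    have hle' : d * D * ‖A‖ ≤ 16 * ‖A'‖ := le_of_sq_le_sq (by linarith) (by positivity)
    rw [hAn, hAn'] at hle'
    have h3 : (D : ℝ) ^ d * (d * D * ‖aeval w (ofList (1 :: l))‖) ≤
        D ^ d * (16 * ‖aeval w (derivative (ofList (1 :: l)))‖) := by linarith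
    have h4 := le_of_mul_le_mul_left h3 (by positivity)
    rw [div_mul_eq_mul_div, le_div_iff₀ hD]
    linarith
  have hαD : D * ‖α - w‖ ≤ 16 := by rwa [le_div_iff₀ hD, mul_comm] at hα
  have hαq : q ≤ D * (1 - ‖α‖) := by
    have : ‖α‖ ≤ ‖w‖ + ‖α - w‖ := by simpa using norm_add_le w (α - w)
    nlinarith
  have hα1 : ‖α‖ < 1 := by
    by_contra hcon
    nlinarith
  have h1α : D * ‖1 - α‖ ≤ t + 16 := by
    have : ‖1 - α‖ ≤ ‖1 - w‖ + ‖α - w‖ := by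
      rw [norm_sub_rev α w]
      simpa using norm_add_le (1 - w) (w - α)
    nlinarith
  refine ⟨⟨α, hα0, hα1⟩, _, hk, fun s N hs hN halive => ?_⟩
  obtain ⟨hlen, hsb, hNs⟩ := hs
  have hx : Represents J M (Nat.mul D (Nat.mul 2 y)) (D * (2 * (D * (1 - w)))) :=
    (Represents.natCast D).mul hM (Represents.mul hM (Represents.natCast 2) hyrep)
  obtain ⟨γ, hγ, hγe⟩ := represents_packedDot hM hz
    (fun y hy => (hsb y hy).trans (by norm_num)) hx hNs
  obtain ⟨γ₀, hγ₀, hγe₀⟩ := represents_packedDot (s := List.replicate d 0) hM hz (by simp) hx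
    (packedZero_eq d)
  rw [hlen] at hγ hγe
  rw [List.length_replicate, ofList_replicate_zero, zero_add] at hγe₀
  rw [List.length_replicate] at hγ₀
  set g := 2 * (1 - w) * aeval w (ofList s) + 1 with hg
  have hG : Represents J M (Nat.add (Nat.mod (Nat.add (Nat.pow D (Nat.succ d))
      (Nat.mul (Nat.pred M) (packedDot (weights D M z d (Nat.mul D (Nat.mul 2 y)))
        (packedZero d)))) M) (packedDot (weights D M z d (Nat.mul D (Nat.mul 2 y))) N))
      (D ^ (d + 1) * g) := by
    have e : D ^ (d + 1) * g = (D ^ (d + 1) : ℕ) + -1 * γ₀ + γ := by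
      refine mul_left_cancel₀ hDC ?_
      rw [map_add] at hγe
      rw [hg]
      push_cast
      linear_combination hγe₀ - hγe
    rw [e]
    exact ((Represents.natCast (D ^ (d + 1))).add ((Represents.pred hM).mul hM hγ₀)).mod.add hγ
  have hgα := halive.norm_le hα1 hα0
  have hgle : q * ‖2 * (1 - α) * aeval α (ofList s) + 1‖ ≤ t + 16 := by
    nlinarith [norm_nonneg (2 * (1 - α) * aeval α (ofList s) + 1)]
  have hdiff : D * ‖g - (2 * (1 - α) * aeval α (ofList s) + 1)‖ ≤ 1536000 * d ^ 2 := by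
    have e : g - (2 * (1 - α) * aeval α (ofList s) + 1) =
        -(2 * (1 - α) * (aeval α (ofList s) - aeval w (ofList s))) +
          2 * (α - w) * aeval w (ofList s) := by rw [hg]; ring
    have h1 := norm_aeval_ofList_sub_le hsb hα1.le hw1
    have h2 := norm_aeval_ofList_le hsb hw1
    rw [hlen] at h1 h2
    push_cast at h1 h2
    have h3 : ‖1 - α‖ ≤ 2 := (norm_sub_le _ _).trans (by rw [norm_one]; linarith)
    have h4 : ‖g - (2 * (1 - α) * aeval α (ofList s) + 1)‖ ≤
        2 * 2 * (16000 * d ^ 2 * ‖α - w‖) + 2 * ‖α - w‖ * (16000 * d) := by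
      rw [e]
      refine (norm_add_le _ _).trans ?_
      rw [norm_neg, norm_mul, norm_mul, norm_mul, norm_mul, Complex.norm_ofNat]
      gcongr
    have h5 : (d : ℝ) ≤ d ^ 2 := by nlinarith
    have h6 : ‖α - w‖ * d ≤ ‖α - w‖ * d ^ 2 := by gcongr
    have h7 : D * ‖α - w‖ * d ^ 2 ≤ 16 * d ^ 2 := by gcongr
    nlinarith
  have hGnorm : ‖(D ^ (d + 1) * g : ℂ)‖ = D ^ (d + 1) * ‖g‖ := by
    rw [norm_mul, norm_pow, Complex.norm_natCast]
  have hqG : q * ‖(D ^ (d + 1) * g : ℂ)‖ ≤ b := by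
    have htri : ‖g‖ ≤ ‖2 * (1 - α) * aeval α (ofList s) + 1‖ +
        ‖g - (2 * (1 - α) * aeval α (ofList s) + 1)‖ := by
      simpa using norm_add_le (2 * (1 - α) * aeval α (ofList s) + 1)
        (g - (2 * (1 - α) * aeval α (ofList s) + 1))
    have h1 : q * (D * ‖g‖) ≤ D * (t + 16) + q * (1536000 * d ^ 2) := by
      calc q * (D * ‖g‖) ≤ q * (D * (‖2 * (1 - α) * aeval α (ofList s) + 1‖ +
            ‖g - (2 * (1 - α) * aeval α (ofList s) + 1)‖)) := by gcongr
        _ = D * (q * ‖2 * (1 - α) * aeval α (ofList s) + 1‖) +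
            q * (D * ‖g - (2 * (1 - α) * aeval α (ofList s) + 1)‖) := by ring
        _ ≤ _ := by gcongr
    rw [hGnorm, hbR]
    calc _ = (D : ℝ) ^ d * (q * (D * ‖g‖)) := by ring
      _ ≤ _ := by gcongr
  have hGH : ‖(D ^ (d + 1) * g : ℂ)‖ < H := by
    nlinarith [norm_nonneg (D ^ (d + 1) * g : ℂ)]
  have hfin := hG.normOf_eq hM hH hGH
  rw [Nat.ble_eq] at hN
  have hN := Nat.lt_of_succ_le hN
  refine absurd hN (not_lt.mpr ?_)
  refine (Nat.le_div_iff_mul_le (Nat.mul_pos hq1 hq1)).mpr ?_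
  refine Nat.cast_le (α := ℝ).mp ?_
  rw [Nat.cast_mul, hfin]
  have : (q * ‖(D ^ (d + 1) * g : ℂ)‖) ^ 2 ≤ (b : ℝ) ^ 2 := by gcongr
  change _ * ((q * q : ℕ) : ℝ) ≤ ((b * b : ℕ) : ℝ)
  push_cast
  linarith

theorem excludes_sound {D J H M d : ℕ} (hM : M = J * J + 1) (hH : J = 2 * H) {l : List ℤ}
    (hl : IsSigns l) (hd : l.length = d) (hd0 : d ≠ 0) (hmonic : (ofList (1 :: l)).Monic)
    (hdeg : (ofList (1 :: l)).natDegree = d) (roots : List ℕ) (dead : ℕ → Bool)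
    (hdead : ∀ s N, Packs d 16000 s N → dead N = true → ¬Alive (ofList (1 :: l)) (ofList s))
    (h : excludes D J H M (1 :: l) d roots dead = true) : NoNewmanMultiple (ofList (1 :: l)) := by
  induction roots generalizing dead with
  | nil =>
    simp only [excludes, force_eq, Bool.and_eq_true, Nat.ble_eq, List.tail_cons] at h
    refine noNewmanMultiple_of_explore hd0 hl hd hmonic hdeg ?_ hdead h.2
    change ((packPos l - packNeg l : ℕ) : ℤ) = _
    rw [Nat.cast_sub h.1, packPos_sub_packNeg hl]
  | cons z roots ih =>
    obtain ⟨-, f, hf, hfs⟩ := withTest_sound hM hH hl hd hd0 hmonic hdeg h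
    refine ih _ (fun s N hs hN => ?_) hf
    rw [cond_eq_ite] at hN
    split_ifs at hN with hdN
    · exact hdead s N hs hdN
    · exact hfs s N hs hN

/-! ### Soundness of the enumeration -/

theorem IsSigns.reverse {l : List ℤ} (h : IsSigns l) : IsSigns l.reverse :=
  fun z hz => h z (List.mem_reverse.mp hz)

theorem IsSigns.append_one {l : List ℤ} (h : IsSigns l) : IsSigns (l ++ [1]) := by
  intro z hz
  rcases List.mem_append.mp hz with hz | hz
  · exact h z hz
  · exact .inl (List.mem_singleton.mp hz)

theorem reverse_cons_append (v : List ℤ) : (1 :: (v ++ [1])).reverse = 1 :: (v.reverse ++ [1]) := by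
  simp

theorem check_sound {special : List (List ℤ)} {D J H M : ℕ} (hM : M = J * J + 1) (hH : J = 2 * H)
    {v : List ℤ} (hv : IsSigns v) {a : ℕ}
    (h : check special D J H M (v.length + 1) (1 :: (v ++ [1])) a = true) :
    1 :: (v ++ [1]) ∈ special ∨ NoNewmanMultiple (ofList (1 :: (v ++ [1]))) := by
  have key : ∀ u, IsSigns u → u.length = v.length → ∀ roots,
      excludes D J H M (1 :: (u ++ [1])) (v.length + 1) roots (fun _ => false) = true →
      NoNewmanMultiple (ofList (1 :: (u ++ [1]))) := fun u hu huv roots h =>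
    excludes_sound hM hH hu.append_one (by simp [huv]) (by simp) (monic_ofList (1 :: u))
      ((natDegree_ofList (1 :: u)).trans (by simp [huv])) roots _ (by simp) h
  simp only [check, cond_eq_ite] at h
  split_ifs at h
  · exact .inl (List.contains_iff_mem.mp h)
  · exact .inr (key v hv rfl _ h)
  · rw [reverse_cons_append] at h
    have := key v.reverse hv.reverse (by simp) _ h
    rw [← reverse_cons_append] at this
    exact .inr this.reverse

theorem covers_sound {n : ℕ} {check : List ℤ → ℕ → Bool} (m : ℕ) (l : List ℤ) (data : List ℕ)
    (k : List ℕ → Bool) (h : covers n check m l data k = true) :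
    (∃ data, k data = true) ∧ ∀ v : List ℤ, IsSigns v → v.length = m →
      2 * numNonneg (v.reverse ++ l) ≤ n ∨
      code (1 :: (v.reverse ++ l)).reverse 0 < code (1 :: (v.reverse ++ l)) 0 ∨
      ∃ a, check (1 :: (v.reverse ++ l)) a = true := by
  induction m generalizing l data k with
  | zero =>
    simp only [covers, cond_eq_ite] at h
    suffices (∃ data, k data = true) ∧ (2 * numNonneg l ≤ n ∨
        code (1 :: l).reverse 0 < code (1 :: l) 0 ∨ ∃ a, check (1 :: l) a = true) by
      refine ⟨this.1, fun v _ hv => ?_⟩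
      rw [List.length_eq_zero_iff.mp hv]
      exact this.2
    split_ifs at h with h1 h2
    · exact ⟨⟨_, h⟩, .inl (Nat.ble_eq.mp h1)⟩
    · cases data with
      | nil => simp at h
      | cons a data =>
        simp only [Bool.and_eq_true] at h
        exact ⟨⟨_, h.2⟩, .inr (.inr ⟨a, h.1⟩)⟩
    · rw [Nat.ble_eq, not_le] at h2
      exact ⟨⟨_, h⟩, .inr (.inl h2)⟩
  | succ m ih =>
    obtain ⟨⟨data', h'⟩, hpos⟩ := ih _ _ _ h
    obtain ⟨hk, hneg⟩ := ih _ _ _ h'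
    refine ⟨hk, fun v hv hlen => ?_⟩
    cases v with
    | nil => simp at hlen
    | cons c v =>
      have hv' : IsSigns v := fun z hz => hv z (List.mem_cons_of_mem _ hz)
      rw [List.reverse_cons, List.append_assoc, List.singleton_append]
      rcases hv c List.mem_cons_self with rfl | rfl
      · exact hpos v hv' (by simpa using hlen)
      · exact hneg v hv' (by simpa using hlen)

theorem eval_one_ofList {l : List ℤ} (hl : IsSigns l) :
    (ofList l).eval 1 = 2 * numNonneg l - l.length := by
  induction l with
  | nil => simp [ofList, numNonneg]
  | cons a l ih =>
    have ih := ih fun z hz => hl z (List.mem_cons_of_mem _ hz)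
    rw [ofList, eval_add, eval_mul, eval_X, eval_C, ih, one_mul]
    rcases hl a List.mem_cons_self with rfl | rfl
    · have : numNonneg (1 :: l) = numNonneg l + 1 := rfl
      rw [this]
      push_cast [List.length_cons]
      ring
    · have : numNonneg (-1 :: l) = numNonneg l := rfl
      rw [this]
      push_cast [List.length_cons]
      ring

theorem mem_special_or_noNewmanMultiple {special : List (List ℤ)}
    (hspecial : ∀ p ∈ special, p.reverse = p) {v : List ℤ} (hv : IsSigns v) {data : List ℕ}
    (h : checkDegree special data (v.length + 1) = true) :
    1 :: (v ++ [1]) ∈ special ∨ NoNewmanMultiple (ofList (1 :: (v ++ [1]))) := by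
  simp only [checkDegree, force_eq] at h
  have hcov := (covers_sound _ _ _ _ h).2
  have key : ∀ u, IsSigns u → u.length = v.length →
      code (1 :: (u ++ [1])) 0 ≤ code (1 :: (u ++ [1])).reverse 0 →
      1 :: (u ++ [1]) ∈ special ∨ NoNewmanMultiple (ofList (1 :: (u ++ [1]))) := by
    intro u hu huv hcode
    have := hcov u.reverse hu.reverse (by simpa using huv)
    rw [List.reverse_reverse] at this
    rcases this with h | h | ⟨a, h⟩
    · refine .inr (noNewmanMultiple_of_eval_le (a := 1) (monic_ofList (1 :: u)) ?_ zero_le_one ?_)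
      · have : (ofList (1 :: (u ++ [1]))).natDegree = (1 :: u).length := natDegree_ofList (1 :: u)
        simp [this]
      · have hle : 2 * numNonneg (u ++ [1]) ≤ v.length := h
        rw [ofList, eval_add, eval_mul, eval_X, eval_C, eval_one_ofList hu.append_one,
          List.length_append, List.length_singleton]
        omega
    · exact absurd h hcode.not_gt
    · rw [← huv] at h
      exact check_sound (by rfl) (by norm_num) hu h
  rcases le_total (code (1 :: (v ++ [1])) 0) (code (1 :: (v ++ [1])).reverse 0) with hle | hle
  · exact key v hv rfl hle
  · rcases key v.reverse hv.reverse (by simp)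
      (by rwa [← reverse_cons_append, List.reverse_reverse]) with h | h
    · rw [← reverse_cons_append] at h
      have e := hspecial _ h
      rw [List.reverse_reverse] at e
      exact .inl (by rwa [← e] at h)
    · rw [← reverse_cons_append] at h
      exact .inr h.reverse

/-! ### Data -/

/-- Coefficient lists of products of cyclotomic polynomials, with the orders of the factors. -/
def cyclotomicProducts : List (List ℤ × List ℕ) :=
  [([1], []),
   ([1, 1], [2]),
   ([1, 1, 1], [3]),
   ([1, -1, 1], [6]),
   ([1, 1, 1, 1], [2, 4]),
   ([1, 1, 1, 1, 1], [5]),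
   ([1, -1, 1, -1, 1], [10]),
   ([1, 1, 1, 1, 1, 1], [2, 3, 6]),
   ([1, 1, -1, -1, 1, 1], [2, 12]),
   ([1, -1, 1, 1, -1, 1], [2, 6, 6]),
   ([1, 1, 1, 1, 1, 1, 1], [7]),
   ([1, -1, 1, -1, 1, -1, 1], [14]),
   ([1, 1, 1, 1, 1, 1, 1, 1], [2, 4, 8]),
   ([1, 1, 1, 1, 1, 1, 1, 1, 1], [3, 9]),
   ([1, 1, 1, -1, -1, -1, 1, 1, 1], [3, 18]),
   ([1, -1, 1, 1, -1, 1, 1, -1, 1], [6, 9]),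
   ([1, -1, 1, -1, 1, -1, 1, -1, 1], [6, 18]),
   ([1, 1, 1, 1, 1, 1, 1, 1, 1, 1], [2, 5, 10]),
   ([1, 1, -1, -1, 1, 1, -1, -1, 1, 1], [2, 20]),
   ([1, -1, 1, -1, 1, 1, -1, 1, -1, 1], [2, 10, 10]),
   ([1, 1, 1, 1, 1, 1, 1, 1, 1, 1, 1], [11]),
   ([1, -1, 1, -1, 1, -1, 1, -1, 1, -1, 1], [22]),
   ([1, 1, 1, 1, 1, 1, 1, 1, 1, 1, 1, 1], [2, 3, 4, 6, 12]),
   ([1, 1, 1, 1, -1, -1, -1, -1, 1, 1, 1, 1], [2, 4, 24]),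
   ([1, 1, -1, -1, 1, 1, 1, 1, -1, -1, 1, 1], [2, 4, 12, 12]),
   ([1, -1, 1, 1, -1, 1, 1, -1, 1, 1, -1, 1], [2, 4, 6, 6, 12]),
   ([1, 1, 1, 1, 1, 1, 1, 1, 1, 1, 1, 1, 1], [13]),
   ([1, -1, 1, -1, 1, -1, 1, -1, 1, -1, 1, -1, 1], [26])]

/-- Coefficient lists of the other Littlewood polynomials of degree at most `12` with a Newman
multiple, with the quotient of such a multiple and an approximate root `(u + v I) / (10 ^ 10 + 1)` in
the open unit disc. -/
def exceptional : List (List ℤ × List ℤ × ℤ × ℤ) :=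
  [([1, 1, -1, -1, -1, 1, 1],
     [1, 0, 1, 1, 1, 1, 1, 1, 0, 1],
     -6426610523, 0),
   ([1, 1, -1, 1, 1, -1, 1, 1],
     [1, 0, 1, -1, 1, -1, 1, -1, 1, 0, 1],
     -6319725598, 0),
   ([1, 1, -1, -1, 1, -1, -1, 1, 1],
     [1, 0, 1, 0, 1, 1, 1, 1, 0, 1, 0, 1],
     -6712118547, 3492164952),
   ([1, 1, 1, -1, -1, -1, -1, 1, 1, 1],
     [1, 0, 0, 1, 1, 0, 1, 0, 1, 1, 0, 0, 1],
     -4108571768, 6291794560),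
   ([1, -1, 1, 1, -1, 1, -1, 1, 1, -1, 1],
     [1, 1, 1, 0, 0, -1, 0, 0, 0, -1, 0, 0, 1, 1, 1],
     3504942835, 6743345587),
   ([1, 1, 1, -1, -1, -1, -1, -1, 1, 1, 1],
     [1, 0, 0, 1, 0, 1, 1, 0, 1, 1, 1, 1, 1, 1, 1, 1, 1, 1, 0, 1, 1, 0, 1, 0, 0, 1],
     -3504942835, 6743345587),
   ([1, 1, -1, -1, -1, 1, 1, 1, -1, -1, -1, 1, 1],
     [1, 0, 1, 1, 1, 1, 1, 1, 1, 1, 1, 1, 1, 1, 0, 1],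
     -6191187082, 0),
   ([1, -1, 1, 1, -1, 1, 1, 1, -1, 1, 1, -1, 1],
     [1, 1, 1, 0, -1, -1, -1, -1, 0, 1, 2, 2, 1, 0, -1, -2, -2, -1, 0, 2, 2, 2, 1, 0, -2, -2, -2, 0,
      1, 2, 2, 2, 0, -1, -2, -2, -1, 0, 1, 2, 2, 1, 0, -1, -1, -1, -1, 0, 1, 1, 1],
     2112813637, 7830550260),
   ([1, 1, 1, -1, -1, -1, 1, -1, -1, -1, 1, 1, 1],
     [1, 0, 0, 1, 0, 0, 1, 1, 0, 1, 1, 0, 1, 1, 1, 1, 1, 1, 0, 1, 1, 0, 1, 1, 0, 0, 1, 0, 0, 1],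
     -2112813637, 7830550260)]

/-- For each candidate of degree `d`, approximate roots `(u + v I) / D` in the open unit disc of the
candidate or of its reverse, where `D = 10 ^ 10 + 1`. The last decimal digit is `1` for the reverse;
each preceding group of 21 digits is `D * (u + D) + v`. Candidates with a Newman multiple have
entry `0`. -/
def rootData : ℕ → List ℕ
  | 1 => [0]
  | 2 => [0, 0]
  | 3 => [0, 456310987445631098741]
  | 4 => [0, 1433380199895920737270, 419308168041930816800, 1692440401401058835900, 0]
  | 5 => [0, 1455216007894681934280, 442089553444208955340, 1624810534192505312430,
     491339608449133960841, 0, 0]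
  | 6 => [0, 1476601018995402493940, 430159709043015970900, 1601813903288511109710,
     574993078614096031920, 523398981500082290201, 720450127036874892771, 1754877666575487766640,
     245122333824512233380317672196231767219621, 486351398348635139830, 1740635988992288771800,
     398186097168148329111, 0, 1425006921899097416240, 1279549873492784867411, 0]
  | 7 => [0, 1495623054697069660230, 437218624543721862450, 1593383888186496499370,
     580713513612202165390, 1643259593501759970010, 1000000000273735270591, 1680473901976775402100,
     620077286814030605461, 488964905948896490590, 1694003673188455341870, 694403537435346798150,
     675319852827003176801, 373907964037390796401859224808315553510110, 456310987445631098741, 0,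
     1683577873594426403900, 497982944949798294491, 465510194846551019481, 1262950425789990817790,
     1444628350195288780990, 1642752880794237665010, 1363729477004346279510122372109412237210941]
  | 8 => [0, 1510752934699256988730, 433363415143336341510, 1590808108485466540840,
     590607188214266422950, 1643954629899974670210, 240613894951719410551749756514512118937600,
     1661301786576377467870, 255797336325579733630882623405867591323340, 844920345657099660531,
     487646886448764688640, 1673322426086127275850, 699442629133882363070, 1735354041600117523670,
     364022032036402203201817261732410014430550, 1909785153390978515320, 1389681404099363960000,
     625899618514994300101, 1666546651691221490090, 533645188901829227000, 489247065797106401851,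
     577400609307348775131, 1886898640788689864060, 1265195327289131294760, 463240544246324054420,
     1824657237482465723730, 0, 1830218229497193593580, 602913127521725851051,
     415750279841575027981, 453872971245387297120, 1638054446091924564170, 338698213844117110611,
     411377416241137741621, 1618033989061803398890, 482029819848202981981, 496929551549692955150,
     1766773576387151728720, 453375822545337582251, 402893187540289318750, 1367441302991486692880,
     1791059884999383913240, 409191891967304919201, 0, 1290899186188542892580,
     1466354811595100189260, 1609446703989586228870, 1409392812296144985351, 1795895184379589518420,
     0, 1753908201391852022340, 1300557371393993837291, 1759386105503596631590, 0,
     1671211855002042835000]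
  | 9 => [0, 1517783545801433712760, 435588396643558839660, 1590745220684969214370,
     579462022913341719950, 1647714973599173340120, 253412737360556659751746587263109874112310,
     1650772310575796259890, 273949327227394932720869504794163516901160, 399126195584571679191,
     488327468048832746800, 1662966779484703344160, 709435559935568220500, 1721124520497525559950,
     370503021737050302171795921031606568887940, 1548348311054834831090, 1384313120797462898360,
     847325352456138535761, 1659099955289488620650, 532137571700943908250, 1735370620103835769830,
     393795919068771074600, 1588271114558827111440, 1000000000276203138540, 1271832039589562264640,
     464474183246447418320, 1731862175778955776760, 1096025603689015110720243502422924350242291,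
     1789758773594933468370, 147218730833375422901852781269603931676760, 1433380199895920737270,
     455220700745522070070, 1637133033890701294140, 621624833514755581140, 610262336512632719011,
     628310327318051890831, 1627789456262778945610, 543119695000652127841, 497462855549746285550,
     1731482910985676235840, 684921706228024544870, 573404897405182048971, 405822443740582244370,
     1363774455790701879710, 414848310041484831000, 1746292712994393399970, 664337930327521453821,
     712619408331131683961, 1293801942988402021280, 478108265747810826570, 0,
     1463433280795582384610, 419308168041930816800, 1611269328688980211300, 459783138245978313821,
     445262188244526218821, 1697708288772754227950, 388478737138847873711, 482828196948282819690,
     1720573898488523271610, 424748041342474804131, 389322663538932266351, 490864923949086492391,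
     1728532505597134010690, 499506881849950688181, 493045422949304542291, 468725896946872589691,
     455006649745500664970, 1417914415391633352350, 1692440401401058835900,
     398606310187386339510320744225032074422501, 0, 1387876899999123228710, 1370294715989243489680,
     1486186855896285723580, 1596621295887109280960, 1438843530494051501541, 1685987162376362870100,
     1429020903300961336751, 1702416609088880899770, 1380215592291867612121, 1695523787395718676960,
     1404053754907036787200164819306016481930601, 1268645020791758470460, 1650273421495751309070, 0,
     1612939874491807573790]
  | 10 => [0, 1509409530301904245580, 434348477243434847720, 1591691687084769463510,
     583760652613118664690, 1652695125998940942170, 210934926548975168201747281176808536661490,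
     1644703293675331009460, 261248062426124806240885966937464664716180,
     1310504886506411690421705663154310471851620, 487980874848798087480, 1657560080483814139570,
     701621496435356682090, 1714127035895933465250, 366527786836652778681784337136304316361560,
     1549339586054933958590, 336128890276965524771143667361900213394860, 1388155239497082715600,
     1035642115486154448520394555872385227512551, 1655977848888500135560, 536077543201596141510,
     1729294001901745125860, 389391451967973053420, 1590926461859092646170, 993163369374439582100,
     1275671203990284713860, 463818827546381882750, 1714752922179240758660,
     1280071429502616975770246342799465496416791, 1768221452493056506420,
     234636220439047513601827155145601469829910, 1519224673851922467370, 1428549903595066656620,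
     454492327345449232730, 1638089637690076621400, 622385107914535112200, 855802894860143517201,
     880417944958734047721, 1636435507363643550720, 324869906632486990660725475862856859244450,
     1359064517599398011490, 497195858549719585850, 1714047355284360575690, 680404261627438268570,
     1775870472597251257250, 404104333040410433300, 1531323417453132341730, 1364530120290454170440,
     412853969341285396930, 1726901384791774334610, 576231933006856222270,
     1395802374208817550711801560464203627032810, 945382071367028424091, 1559481033155948103300,
     224452922622445292261075409197888278825560, 1297208060288757260460, 477663541847766354180,
     1627215088062721508790, 587780258820084752800, 1763044452876304445270, 1876492190595898747690,
     1457962551295168101690, 417284422041728442200, 1613847679888764682860, 594142761420461775530,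
     611844761019451667761, 327887324657562017860, 1683502464173904339400, 630079247014971766021,
     482417580548241758050, 1705204935486684623610, 739138372437072092170, 635469880217548146441,
     608693084814814592081, 1538759426553875942640, 1398979411694292311640, 545681536401091560951,
     1714787181094168134490, 497215083197589505570, 490590470200022339581, 407947564267396687100,
     1570471414657047141450, 584927788008184834481, 454127323645412732360, 1650012917665001291750,
     554938002306982728081, 1832711717688269256200, 556411432204814500201, 1415072212491199276920,
     444289849844428984980, 1700171664999139132340, 724328796535150473121, 750143921340409640931,
     1595038926959503892680, 679563954926104242931, 492739774349273977430, 1705409837470540983730,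
     708937436930868214550, 1851015565695809410140, 383831203738383120370, 1369920753488955916660,
     385007814638500781460, 1816273361391071008620, 1432652492807498499221884897529803063259480,
     358625855064454050250, 1320436045590191451990, 470833062947083306290, 0,
     1482083394696333098830, 441526433144152643310, 1598806528986989979910, 409073538540907353851,
     427888741442788874141, 1673759035575938212630, 451670831845167083181, 490545745849054574580,
     1691203217287118865700, 440518967244051896721, 383675509838367550980, 1543237274654323727450,
     1424160678499329324440, 384619817738461981770, 1691425398693739677700, 355296706746390350781,
     394666065071149058370, 1577851483457785148330, 404961073440496107341, 468154498946815449890,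
     1670767737367076773720, 1836737962793250451280, 403727484340372748431, 1434416625693523350860,
     1658946623695555221390, 480775326548077532651, 485376452348537645231, 1606434629860643462970,
     496109752049610975201, 499256989449925698940, 1783770508181355880860, 491503289549150328951,
     413047573541304757350, 1379716997691442176160, 1818554054196392930490, 450660414345066041431,
     459655448045965544801, 475898154447589815441, 480807162948080716290, 1451376159892642491460,
     1619226809992063210960, 344022151557304565841, 288246522058789463780, 1632531911763253191160,
     1116953739790729984961501213817709941820710, 1784273851890341085730, 1003260201771860770560,
     353125561635312556160763001116361595255290, 1413754393894156190560, 380773190468217849021,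
     408308313366431126151, 404186146368756179260, 1354803265901924307520, 1417855896490144928240,
     1646084015505272067750, 857187007567180257781547679535310457679880, 397664203039766420301,
     1379826537689240358230, 1502784917298146488970, 1592052436185807174280, 1463922457294380632911,
     1664789007376395856430, 1445061998195995127661, 1678060256986528884020, 1423768067491609835711,
     1545872676754587267660, 1405857239101633223290, 1672112675791984552960, 1416239347896366534211,
     1582715578358271557820, 1372579980192045275011, 1691740587969174058780, 1834638402896328363290,
     1641374145392728879270, 719928571046602689931753657201016227856930, 1614992185761499218560, 0,
     1773993851186409763570, 1412219741702528701081, 1249856079190380856711, 1298378504095032382851,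
     1291062563589080727210, 1610608548490094763060, 856332638671479922541663871110209739746750,
     1648568168264856816810, 1765363779992120269540, 1006836631175806908280,
     252718823659080426191789065073906788182920, 0, 1054617929177952009871, 1595813854087918950020,
     1717376455973866326680, 1737428517093141505240, 1711753478401140159400]
  | 11 => [0, 1499064599800749020030, 435055385943505538590, 1592907713884732107580,
     585698772613777799780, 1657970205899058842810, 249929132057763372371750070868407777545990,
     1641114057874993628310, 270868143727086814370891347298966489750890,
     1270879351703936824811716998050710412154880, 488158820748815882070, 1654755355583255264080,
     700978637234582767250, 1710865763794935583490, 369089359536908935951777994725202798698260,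
     1549900775254990077510, 347744613076849010371116195935094872052870, 1393816852097478574700,
     358135544335813554431814987212018654407690, 1654998470787936669830, 532944819401365387360,
     1727231013900484725840, 393060714568440903550, 1592634161159263416100, 1000000000274693403120,
     1274450875490529877900, 464171901646417190160, 1704661331178939328810,
     1408087717311491637700183824566018382456601, 1755695117091699709220, 1811793076999671864400,
     1519453217251945321710, 1428348423594682097580, 454891598745489159870, 1639885726889802043450,
     623627456614804885790, 1733027186805034790450, 279548894327954889431805134096010244113950,
     1644456260164445626000, 360970548772324009261, 1366931850300565339660, 497330393549733039350,
     1704304849683427770660, 682677174227456869340, 1762710298095438789860, 405136920140513692010,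
     1531640780953164078080, 367269316095563460081217272355499217929810, 1366458549090559183230,
     414038444841403844480, 1716927619090207414500, 575295638706961261560, 1785657759801093460070,
     346779207570126535771839952314506409334210, 1560115092156011509200,
     239600372423960037241068949415985890804320, 1298266308889076427640, 477896614547789661450,
     1629884170162988417000, 596825093421463104320, 1799545604984072315920, 1849195982095660731000,
     1455216007894681934280, 418478785741847878570, 1616518950788773569900,
     914556555264859767670303424847730342484771, 899223753064845481830314101618531410161851,
     329658317058505713290, 1675350866273907792900, 852201128957458918690, 836150194455051209981,
     482630791748263079170, 1697001974385550417460, 737157944836597472000, 1762520999698065502140,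
     892172623262282467611, 1539152850053915284990, 1400839159294194591040, 328258853942606110360,
     1708102257892506636690, 492286727496828539150, 1513725255621180822131790175240004457909850,
     409699206867700026310, 1571331803657133180350, 777994177451175737710291971367429197136741,
     1319091479595613568550, 454610405545461040550, 1654850719365485071920,
     828412805658482894730318398795831839879581, 1804760547089212545010, 317938977351089814690,
     1414664180190967781980, 444833662844483366280, 1703091509297667654950, 629993637017895137060,
     991516897472574698551, 1000000000271320431291, 1596669146859666914670, 1394964444698761733950,
     492895196449289519640, 1732464056473246405630, 709493622330674970960, 1818229617094484842160,
     385586304038558630400, 1371002477388951433860, 387726361438772636140, 1783183862489927352690,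
     552831759307199534660, 1047191729082964777220294296060929429606091, 363846609365318042500, 0,
     1322604146090538795980, 471122980847112298080, 655281117931771317060, 1478055088395903762650,
     442089553444208955340, 1600962765587039626130, 571010338409831432540, 558371179209087514321,
     586713420211775623531, 1666831789575534031780, 629092875625283509321, 490708760049070876000,
     1685320576486062627500, 534682284711143519671, 1040261576976716047440, 385296083538529608350,
     1543689012954368901280, 622510811115326955761, 387041821638704182160, 1689758898992569273430,
     543634387400928122150, 609254777013009323391, 620951158913492294761, 1578923525257892352510,
     632897198919026263801, 468459661046845966100, 1679853611167985361100, 610681886615264582331,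
     1805809866492184775980, 622048306615836112141, 1433108020293151575520, 459493444445949344440,
     1666783546295581667640, 538596344800000000011, 546436730302249560241, 1608729348560872934840,
     490766177795250807881, 499382372249938237220, 1755516398382980272070, 662394825826679591140,
     1820744547697412475630, 413854633641385463360, 1381352064291434687870, 424127795742412779570,
     1781547657793297132750, 574974852205464915670, 569325004004893851881, 581395605506649038261,
     1310957037891956273290, 481016913048101691300, 554259206204795193651, 1449347299192339798780,
     428735586742873558670, 1624810534192505312430, 717797339338903108701, 656949881031291528581,
     1637552963563755296340, 741975609836347385141, 485569012648556901260, 1753973456388063257160,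
     745882737839753471710, 748609697538860282391, 723641621737460225481, 1414002543493875449720,
     681562458526174125421, 687982663827080141321, 675151933728517001591, 664916209725264515491,
     716178238531146647691, 460055313746005531370, 701078782331689093891, 1417124091489929338060,
     450646023445064602340, 1638431067106073888120, 834319137966126677611539093202408922018580,
     895650274069066327180491858094010901540141, 1420607092899549379160, 495194335949519433590,
     1380530753489170954340, 405239226440523922640, 1497740519797824096420, 430361405443036140540,
     1593785731885838539670, 444023639544402363951, 438301403343830140331, 1658981345775928414210,
     422235576342223557631, 486774546848677454680, 1673950042185653024430, 431518542343151854231,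
     423177899042317789901, 1546365374654636537450, 456310987445631098741, 452110142145211014211,
     1672392282291252958900, 460733597946073359791, 457064386745706438671, 1583968291558396829140,
     446711146544671114651, 461627882646162788260, 1714285037071428503690, 1802288019094041974800,
     447547414344754741431, 1443091093795429030830, 1646433752192778848940, 393824626439382462641,
     195073004519507300450434043559901566699700, 1618033989061803398890, 295338669238007062631,
     496249700649624970060, 1747099619685128127530, 1817104221299411259690, 398913218939891321890,
     1375099954192165838220, 406496543340649654330, 1771143028695011307950, 426946358042694635801,
     418583275941858327591, 395132976439513297641, 476146388147614638810, 1461063755994004698890,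
     1614522103490347412030, 491339608449133960841, 489429891648942989161, 1657944071865794407170,
     483439388848343938881, 481001758248100175820, 1741052234089186916060, 486304850848630485081,
     484084101548408410151, 497859122749785912271, 496798239249679823921, 499877570649987757061,
     498367905749836790571, 493499545249349954521, 451208950945120895090, 1422855918391333209420,
     463019936046301993601, 469578597946957859791, 466235553746623555371, 456310987445631098741,
     1378759543890022527820, 1477769114394392151500, 1598543004788099133440, 1641707191405188815430,
     0, 1699507159575292709400, 334398802761185844661, 1723912921090460576450,
     1058956883378138678000, 309408443456653205511, 1457118847401129026430, 1727231013900484725840,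
     385038139184172640960330269206833026920681, 385740378068775903900, 1245375639490103153560,
     1441622287393152975920, 1649493822898261548810, 408820483472517906501, 413452245368601266871,
     1393011579992986397600, 1452381956191715694810, 1609769680992814351980, 390092490039009249001,
     1517048485007031861810, 1427240425394749948290, 1422957915690007790670, 1513949752100261072350,
     1591048532785148447390, 1647949738199643825740, 1652927909675882094140, 1465325740895401754161,
     1665655368684998875330, 1725846538598101731850, 1547911901454791190130, 1438596421196353881781,
     1661884828789956938000, 1441733379494132632951, 1587246519058724651890, 1420416430291814309951,
     1735616061478300429300, 1794552768394892992750, 1638492365491156074470, 1442119940802682749751,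
     1625190867462519086730, 1404797999395654396701, 1736442488885729283700, 1421721447395287519291,
     1365032143391096292090, 1754200699994912848770, 1382731480192347172461, 1291211712988311621330,
     1611347953189248162670, 859335145163876449281686242197509365444920, 1699737022469973702230, 0,
     1726459603388904547040, 974608711772553233591808968383904486894040, 1738254133598316653980,
     1408087717311491637700183824566018382456601, 1301719106393596832990, 1254602456988038890141,
     1262184440390839143581, 1596527959087296118450, 1646347225803590774800, 1689766251176273143410,
     1707826482789424815410, 1042371377278639204600, 1701016679696808364210,
     1683633836422046275620749241577355950463420055039170805503917081, 1649095433096244971860,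
     1611365329991952068290, 1590317280386090392010, 1678475767977103703190, 1690295909588492824010,
     1676479554893985549940]
  | 12 => [0, 1495792037299926286780, 434658054443465805440, 1594024650784774244690,
     582105867013331317870, 1662973233899393811780, 177024524447505104821754042332207412628250,
     1638968077274757563920, 264036086626403608660878040377965409836170,
     1265261680701212104731728473765510759751880, 488067883748806788370, 1653380564582907100900,
     705350329735167608350, 1709658729794314264760, 367494241736749424171774696071801762295570,
     1550215184055021518390, 346624509477955212791128144206294517960570, 1397623224198110065920,
     354017418635401741860172711563517271156350, 1655095894787630730810, 534079275001292385250,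
     1727305592799729549360, 390561229668242674020, 1593708344359370834420, 1003883406575545793310,
     1271732670790261390440, 463983262946398326290, 1698399738878605097400,
     391615726299825067770722118342156632138781849117245012246427900, 1748058530490729812510,
     1802137317498357793100, 1519572810251957281010,
     184151307118415130710532186933022301474601344382652120325955260, 1429957366994671710120,
     454674609445467460940, 1641935369489736272340, 622373140514691633990, 1736271208204281951650,
     271153136727115313671802338311108717694690, 1652566913165256691300,
     325845415132584541510724627500451159454320, 1367671660701415693970, 497262848949726284890,
     1698536518882777441090, 683253277627709527760, 1755040000694213042350, 404526306440452630640,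
     1531811227653181122750, 392179616795601945991207626624397692602090, 1367699591990752182010,
     413349794141334979410, 1711480507389212181150, 574715657306769038510, 1776731996599429373590,
     343363018670820641141827994771604465228630, 1560477402756047740260,
     228437585922843758591078858298686335906450, 1297242139489103702320, 477775166347777516630,
     1631711263363171126320, 589983786321242865671877327855810323555840, 1784209043584936894790,
     1832078619894810224040, 1508744084150874408400, 1454990477394445509880, 417790165541779016550,
     1618895003788901048230, 602630492322075536530, 874523598767023536451730996545307886925540,
     326309296657694631120, 1670381349073765555900, 848512084556758717700, 406091332387504207681,
     482520689348252068930, 1692384292784817411410, 739329488336768132830, 1755699126796665350560,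
     312417207131241720711815045854003186672790, 1539367663653936766350, 356473559272145412620,
     1403107929394391068270, 333179709043126674710, 1704880383391504540140, 495981123897118500860,
     1781723507902462746220, 408315694467534711960, 1571836989357183698920,
     251606899251994402660939403651571090977360, 1315783976895689429250, 454347978045434797800,
     1658575965365857596520, 746128220246162317700, 1788305755788676226130, 1837781227297130699790,
     1513698712651369871250, 1415384164590940878780, 444532980044453298000, 1705437419496746440630,
     628449421717848507810, 809042107756858786871802465076507464628620,
     181990721236396457441850188132610134428570, 1597694386959769438680,
     287383428428738342840781219829250802150550, 1398858872199319777810, 492816491049281649100,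
     1744367505578627280640, 710794605930905395320, 1799762698193146824850, 384518319838451831980,
     1524485063652448506350, 255223974068935885941277930470104331179210, 1371999584289062108050,
     386091484138609148410, 1765583306588698579260, 551596379006757718980, 1823349605998481770790,
     359476711664830138940, 1549024498354902449820, 1352248484513239861920364779868586356954221,
     1322548525690711245890, 470970023047097002300, 1604457159460445715930, 661146970633001956460,
     1699608443169960844300, 1800775621880077562170, 1476468446495549399740, 441776657544177665750,
     1602754463087165743820, 569396564609455291040, 1690801955706798791810,
     337399856575557243771801499610113423517770, 1662680554275222856980,
     300363020830036302080910410976964745256210, 903259477662955692371, 490625857849062585780,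
     1682180334785400486870, 936294841568343107770276690687527669068751, 1749469244798013566000,
     384308281538430828150, 1543938232154393823200, 1431514639799204475580, 385578697238557869720,
     1689608248391878230670, 544402543800892065650, 852980778558581160621, 396739103971424688780,
     1579565957357956595720, 877119928958819186931, 877496242657966542111, 468297860846829786080,
     1688800692868880069270, 886875972061858819661, 1788656101491029894110,
     277717597027771759701840660221398975401680, 1516430746851643074670, 1433656466593043592860,
     459307770045930777000, 1673942544695785567660, 611389106112639367380,
     1597107977417614569531804821189910773526940, 315437972731543797270403750573888392376860,
     1610237444461023744430, 342359782434235978240879040515272443425670,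
     864712147565521926730338067208033806720801, 499319674449931967440, 1740693908582547027400,
     662326669827027075400, 1801208303995504822390, 413383797941338379790, 1527778194052777819390,
     1382912642991604663560, 423633913742363391370, 1763651433591389397530, 574808065105340222920,
     1506548979718210501701827953835101066467250, 391424138677415047860, 1553750368455375036830,
     276429522527642952251026221537180085089430, 1309406124592037216320, 480908249348090824930,
     1613173650061317364990, 790213205959860735570297656074029765607401, 1715880815771588081560,
     1829116408482911640830, 1448932127492164168400, 428254714342825471430, 1629289536993032700410,
     1019619650275210989391, 1012707095675560162351, 1034224918477258666901, 1641420017164142001700,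
     976800593370329153581, 485470120948547012090, 1739322483686654363870, 748442942239811535410,
     1005458564872559205150, 1010114924873442687631, 1534610691453461069130, 1415587231393914352590,
     301586524530158652450253455410725345541071535534517420771205490, 1768290119895827661570,
     518124734798197354550, 958770276773048617420290341270652382518861, 405046412868949362040,
     1563373066656337306650, 948486104667917587690, 938735351666401182791, 459840110445984011040,
     1630117946063011794590, 970398674570168554481, 1744815967074481596690, 1879736354591653112900,
     1417475797989871913870, 450399612545039961250, 1627665010205271462570, 608470632415057994500,
     834267602964055462321537962932308110455240, 1087260244083285266710214479640021447964001,
     1584180090758418009060, 1424399926499813654620, 495121958549512195850, 1665081882466508188230,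
     703363797032073592950, 1801545623380154562320, 397502856439750285640, 1381503292689247631030,
     404348807840434880780, 1739494151673949415150, 554302354804602469730, 1874097996093754667990,
     364342857369588576240, 947421550776545087180205321327620532132760, 1342640315193460872290,
     474685627747468562770, 1007613751380176320010137449409527079522051, 1494754127197358611810,
     429889871242988987120, 1595219362685935822970, 600759902914758636920, 596892071113769482451,
     598280268515744160451, 1655530818275598887500, 571572892008998126961, 486678636748667863670,
     1671890869285111018090, 584730603511464002121, 1737747827298098423430, 576148714411405182411,
     1546638920654663892050, 1432680322304350620760, 631378089926137308971, 1673524489890855234040,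
     539326264203270640970, 602376776318585421141, 386591122166206978510, 1584730445458473044530,
     1256337228088969157820, 461420033046142003300, 1729958675576531631050, 574104680314974989341,
     1785392565492477562690, 291461433945271297881840465709800371348850, 1517909619251790961910,
     1443902286695262211450, 451870250645187025060, 1651104438293008673740, 630222107215115205730,
     628000416214662191251, 629667501715593210231, 1620124821162012482100, 610313235312175783061,
     496179290649617929060, 1733581753284130108420, 681724983826345875400, 1797986941497051070600,
     398167835339816783530, 1529616994952961699480, 1376871430792424504410, 405594583140559458310,
     1755531652492761279940, 583692284708158012350, 632300408517212263671, 638462129718664960751,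
     1556579694555657969440, 1290031416789355583640, 476016623747601662370, 1619251169561925116940,
     620489670815717820731, 1730280669873028066970, 1874711784289989556360, 1460254777093755732940,
     409740136040974013600, 1617604836890668329210, 545009523103447414461, 528201498701705156231,
     1667812005766781200560, 548240697301194721281, 480884474948088447490, 1729230835687618842380,
     725737382134982318560, 551067873002377742961, 540474409501145553321, 1536733592753673359260,
     1420258385996177215120, 493658377695561522391, 1755503492697160430880, 485715890198887795950,
     504207963200767879381, 408435020266539177900, 1566798508156679850800, 523761665498880178831,
     450909283145090928310, 1638202098463820209830, 515780114799496940621, 1766925400276692540010,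
     1884603864294842350410, 1423328288391260731450, 440793598244079359820, 570256591906056120551,
     584615835907864045921, 577382385307836481751, 1589141090958914109080, 576892966605303593841,
     491583354749158335470, 1678637359367863735920, 704669644229417042240, 1853913938589174543490,
     575472179206056720271, 1379979981290142171140, 535090832705126125941, 1776264695377626469520,
     569318190109365498120, 570042633508680236781, 557261815509036478181, 1321601827192017611210,
     468823985646882398560, 563496914506505113421, 1476238334994127845770, 437943178343794317830,
     1600568167888317090650, 684216023632532633931, 702198209232867162381, 1690291339875199029670,
     1195925009991400474481582775989812705142840, 489342836448934283640, 1716547351888962468250,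
     660436335532602026200, 1061264648878654112510, 692351862635171487221, 1540973453554097345340,
     743662772437701712261, 743686628236477764171, 747138013137224064571, 728267329735914856341,
     732345332135039448891, 1573501156057350115590, 756541323140967701351, 466059627646605962760,
     1653647535865364753570, 727791532637810284661, 1822682120882268212070, 735005195037369003641,
     1441625318092986365390, 456861889145686188910, 1656126341099687758550, 677451474826201540811,
     688433472627270901831, 1598878453459887845330, 650960048226371310901, 498302725749830272570,
     1706358765570635876540, 664513001325447459430, 1863190132794506680370, 408362575340836257530,
     1395061616393165780340, 417984798541798479850, 1834790471890186899480, 702757861029655274481,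
     711012660229982456461, 702924939132940042431, 479311107847931110780, 694078746829836160751,
     1451759303191546581860, 422588509642258850960, 1612192558993328202030, 1593908668106285941240,
     305659265155500079550, 1619818434061981843390, 1514273054206101946230, 483979397548397939750,
     1809779220282234134070, 1023199407174969034960,
     331679277133167927710113813279311381327931926688673905164479650, 1428427108494683548600,
     323989095540779755100, 757869934045290080711, 734738319848159768650271526234965064998841,
     401663614267396431380, 804074990552215472541, 456966452145696645210, 0, 1423107033889925000560,
     447271896844727189680, 1606493949200312842320, 601141128319548003431, 620543223423708784031,
     1447671032501632105190, 493974276149397427610, 1389686765190113136040, 394417626039441762600,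
     433201492243320149221, 437063781943706378190, 1592298010585224051510, 428163011042816301101,
     432680679843268067981, 1649966775375568559260, 440624099844062409981, 488754624548875462450,
     1664128608784546401170, 1725623492497308828040, 440143743144014374311, 1548201495054820149490,
     415269554941526955491, 421640338342164033831, 1663014450189669521950, 406291656040629165601,
     414705248941470524891, 1588104611558810461140, 426498844342649884431, 465271562146527156210,
     1723515508378508205320, 1779216274293145427800, 425961965042596196501, 1518698706151869870600,
     453862932145386293211, 456105278945610527890, 1641864160791289161520, 450975502045097550201,
     453432624445343262441, 1627952481762795248160, 458609308145860930811, 497793002649779300260,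
     1725026189984605047110, 456102348545610234851, 407840522540784052250, 1530627347253062734710,
     1366316789291325098390, 417158266241715826620, 1743170389792857942400, 439522597643952259761,
     442930034844293003481, 1558243006155824300600, 1290117292588300874050, 478654236547865423650,
     1623437362562343736240, 1743621724574362172440, 1877008190693223729090, 1464431847895083810760,
     1613920389389477859280, 329618651339689286141, 328546738860374234840, 1692011861272742654690,
     380181566338018156630097376410809737641081, 483332833548333283350, 1717866546987519343070,
     968395221772085514881794455505801351288180, 336342680233634268020681242812645098974940,
     1537922648953792264880, 1407950994095955425470, 307318456739434827830, 1735265612296391756520,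
     361031923146963948521, 412104134968465050830, 1568873763756887376360, 1298371237593444392280,
     456065941645606594160, 1644155764464415576430, 1794090303079409030290, 1887698330797123243910,
     1421176916291766902650, 414988408041498840801, 402305613440230561341, 410383890141038389011,
     1592358529159235852900, 421847260142184726011, 493422740849342274080, 1690396465669039646550,
     1855632187492875432830, 389822951538982295150, 1373049773689686984510, 393904450139390445010,
     1825559259087191800200, 1448810327712729581871886171878099911688870, 371682878767296434420,
     401121546940112154691, 472045628247204562820, 1483627617795491379450, 1598326202887467675090,
     486301287748630128771, 487398612648739861261, 1682221568675888415200, 490297607949029760791,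
     491258773949125877390, 1703353451388296986650, 488998856448899885641, 389245882238924588220,
     1542294775854229477570, 482090381148209038111, 1707002584696359289140, 480427190148042719011,
     481743450248174345021, 1575932402757593240260, 485081865348508186531, 469423748946942374890,
     1661843656066184365590, 1843356619290208212940, 484756519648475651961, 1442054014793960625360,
     1656666265097242428580, 495897750349589775031, 496729374649672937461, 1602914990760291499060,
     499067604649906760461, 499816107449981610740, 1728256589672825658950, 498041137549804113751,
     416037567141603756710, 1384640367092574626500, 1834201990393968143180, 491255916249125591621,
     492215730649221573061, 494833111949483311191, 481705328648170532860, 1454944474592480732910,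
     1614232625292420291870, 460632336746063233671, 462823358246282335821, 1626227613962622761380,
     467679674446767967441, 1804303628588455238100, 465389308946538930891, 467271857546727185751,
     1423680352195310821190, 455143268445514326841, 449784816344978481631, 452839466545283946651,
     459026546845902654681, 461284097546128409750, 1422504673690458798620, 478198974647819897461,
     475514936747551493671, 476948776747694877671, 480485094048048509401, 1384041991389963266870,
     1499860620796690018260, 1591776093286220192040, 1639352266601441390180,
     254726595253673086831768469792017805647000, 1672646054076607565280,
     1242130066493716093951649122675713748259640, 1688227065887707605530,
     1765415457903676471641103481643887173876830, 362469347836246934781856193155212634967180,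
     1544856731954485673180, 326475510556150336121, 1681285544993919090530, 344904105656611551911,
     392685036767692521980, 1580531230258053123010, 1252861987387796461990, 1677739191767773919160,
     1845745170694188278590, 306362040559279444401, 1456375274696539711910, 1640646742293868948690,
     751041760248835139881694436689017483852320, 256537389825653738980360389529696851813190,
     1610611159561061115940, 303979635330397963530420807764090242425151, 1791562328983515528220,
     431494554393801742700260505848726050584871, 402097971240209797120, 1375428424993270149450,
     1836422846998701137710, 288519493046916079731, 334195646467294102901251677775015000939700,
     1282710363988327791320, 1467175793593974765320, 1607743130490511116950, 381104996665122047531,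
     1639130749463913074930, 387807441470889690291, 1795864678292676877620, 370710463467174793071,
     394816341470353356501, 1432108702298464835990, 408223907167864973441, 405975349665969314591,
     410712275167346277120, 1278817313292451983600, 1429743408592004802210, 1639076913600943171760,
     791301956752792055011597950224512788926510, 393506051279014052541, 1382016450890956448530,
     1480532183593871513890, 1593724950188218484010, 1618276863802624997700, 1672869934967286993480,
     1211430706491952198881587156404309460645710, 1773969703796838321860, 1071234186880983340870, 0,
     1484517314503008842560, 1701809608403910434320, 301600261538925149681, 1243462229988550393280,
     1449384935093601577580, 1627333808096601220500, 395542840939554284091, 411719924041171992401,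
     1399645256394614395790, 1456473626291673145970, 1598645848192016975670, 1590767032903867312750,
     1532118809306371394460, 1438674751095988099120, 1428127577290412505130, 1514284110301744617950,
     1591564980184852173880, 1651917921699173662230, 1646037994475414519340, 1484219885696340917701,
     1659094694884019516820, 1716851304896343048560, 1549090717254909071710, 1460673736295405388171,
     1657365300088792207670, 1465920725494476530291, 1590259864359025986420, 1453012074192757059201,
     1717353536379146561020, 1771751574793198659850, 1519115525451911552530, 1430681810395501860140,
     1638459884490333418850, 1448403621496438443221, 1634135274963413527480, 1436503085993805730561,
     1717167836984509924290, 1780471841497542207390, 1531176014753117601460, 1363690789890526948880,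
     1731334185792188260830, 1425284343191825907091, 1559206402155920640200, 1295330356288483113440,
     1626278557862627855770, 1756716903975671690380, 1613408878288888754110, 1397369508201549438111,
     1685862502773742229100, 1425895320200154053321, 1708538566486979011120, 980380350271287059390,
     1538579967353857996720, 1399240097594606656380, 1719499179794829501370, 1417894133496910144511,
     1570110129157011012900, 1415269396994517881461, 1648491685264849168510, 1834923476286851989380,
     1361537870790972534851, 1371550578792158623511, 1594405417259440541710, 1379510329691619886611,
     1700902207670090220750, 1853745471095117959930, 1369777893289070784330, 1820594811790333094340,
     1377626859990217005931, 1318275016690000878680, 1598336386187063708560, 1659019458104086983010,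
     1676010904875981936020, 0, 1694144835187469329550, 1029601325976088819620,
     1543033548254303354810, 1694340735294368226550, 495283795416519089881806777388211753637550,
     1577411490757741149060, 1272208467892251978180, 1668320723266832072310, 1839992183792593771840,
     1657613134795878340770, 1338853029900772562381, 1605582374360558237420,
     116081688611608168861405688338906271044300, 1761897272876189727270,
     992386249178653569791862550590899589640170, 1825891768996092300130, 1410016214203246108451,
     1305921253691020411430, 1617428990192066593300, 1260670512188902235211, 1630904756563090475640,
     1791818622190235497950, 1251557058290122947011, 1297801791292427520581, 1294649670794097542451,
     1339563665000514759140, 1288987340287779924461, 1289205394588746474181, 1591684305985871573100,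
     1643526441200850700800, 1666820291376490732930, 1680404861486855110350, 1629133967503181776131,
     1545652022354565202220, 1673690703792432771820, 1653375491008630310930871855794268889119371,
     1582209834858220983470, 1687582793268758279310, 1839722069295967157880, 1640523288792934796640,
     1744776026417891091160722069530448745085250, 1613908516261390851610, 1780208544486084186980,
     1635220131913400980540647751516042790165081, 1818009279199998313220,
     1607820383717166022670792373376156167277271, 1609438770790130428120, 1645982581764598258160,
     1774674664992688169870, 996116593974769112050, 245957668256604161871822975476012100199960, 0,
     1656636981802148037440, 1594953587587940079500, 1698413475869841347570, 1745154004394147067610,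
     1051513895878220366810, 1709218521201881373120, 1635657143096720004800, 1603260896492076868020,
     1589287725285203822120, 1659751496576443685710, 1670803582186022122890, 1547160533854716053370,
     1662706851690876323400, 1585294751458529475130, 1709411906270941190610, 1634447457491385672480,
     1620042381262004238110, 1765585206487716252000, 1665804354000454973641, 1660627884466062788430,
     1750294062392106175340, 1745273405202727767810, 1708313514676465613920, 1720684037092034086190,
     1692681543677971136510]
  | _ => []

def special : List (List ℤ) := cyclotomicProducts.map (·.1) ++ exceptional.map (·.1)

theorem reverse_eq_of_mem_special : ∀ p ∈ special, p.reverse = p := by decide +kernel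

/-! ### Products of coefficient lists -/

def addLists : List ℤ → List ℤ → List ℤ
  | [], m => m
  | a :: l, [] => a :: l
  | a :: l, b :: m => (a + b) :: addLists l m

def mulLists : List ℤ → List ℤ → List ℤ
  | [], _ => []
  | a :: l, m => addLists (m.map (a * ·)) (0 :: mulLists l m)

theorem ofList_addLists (l m : List ℤ) : ofList (addLists l m) = ofList l + ofList m := by
  fun_induction addLists l m with
  | case1 => simp [ofList]
  | case2 => simp [ofList]
  | case3 a l b m ih => simp only [ofList, ih, C_add]; ring

theorem ofList_map_mul (a : ℤ) (l : List ℤ) : ofList (l.map (a * ·)) = C a * ofList l := by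
  induction l with
  | nil => simp [ofList]
  | cons b l ih => simp only [List.map_cons, ofList, ih, C_mul]; ring

theorem ofList_mulLists (l m : List ℤ) : ofList (mulLists l m) = ofList l * ofList m := by
  induction l with
  | nil => simp [mulLists, ofList]
  | cons a l ih => simp only [mulLists, ofList_addLists, ofList_map_mul, ofList, ih, C_0]; ring

def prodLists (L : List (List ℤ)) : List ℤ := L.foldr mulLists [1]

theorem ofList_prodLists (L : List (List ℤ)) : ofList (prodLists L) = (L.map ofList).prod := by
  induction L with
  | nil => simp [prodLists, ofList]
  | cons l L ih =>
    rw [List.map_cons, List.prod_cons, ← ih, ← ofList_mulLists]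
    rfl

/-! ### Products of cyclotomic polynomials -/

/-- Coefficients of cyclotomic polynomials of small order. -/
def cyclotomicList : ℕ → List ℤ
  | 1 => [-1, 1]
  | 2 => [1, 1]
  | 3 => [1, 1, 1]
  | 4 => [1, 0, 1]
  | 5 => [1, 1, 1, 1, 1]
  | 6 => [1, -1, 1]
  | 7 => [1, 1, 1, 1, 1, 1, 1]
  | 8 => [1, 0, 0, 0, 1]
  | 9 => [1, 0, 0, 1, 0, 0, 1]
  | 10 => [1, -1, 1, -1, 1]
  | 11 => [1, 1, 1, 1, 1, 1, 1, 1, 1, 1, 1]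
  | 12 => [1, 0, -1, 0, 1]
  | 13 => [1, 1, 1, 1, 1, 1, 1, 1, 1, 1, 1, 1, 1]
  | 14 => [1, -1, 1, -1, 1, -1, 1]
  | 18 => [1, 0, 0, -1, 0, 0, 1]
  | 20 => [1, 0, -1, 0, 1, 0, -1, 0, 1]
  | 22 => [1, -1, 1, -1, 1, -1, 1, -1, 1, -1, 1]
  | 24 => [1, 0, 0, 0, -1, 0, 0, 0, 1]
  | 26 => [1, -1, 1, -1, 1, -1, 1, -1, 1, -1, 1, -1, 1]
  | _ => []

def orders : List ℕ := [1, 2, 3, 4, 5, 6, 7, 8, 9, 10, 11, 12, 13, 14, 18, 20, 22, 24, 26]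

def properDivisorsList (n : ℕ) : List ℕ := (List.range n).filter fun i => i != 0 && n % i == 0

theorem mem_properDivisorsList {n i : ℕ} : i ∈ properDivisorsList n ↔ i ∈ n.properDivisors := by
  simp only [properDivisorsList, List.mem_filter, List.mem_range, Bool.and_eq_true, bne_iff_ne,
    beq_iff_eq, Nat.mem_properDivisors, Nat.dvd_iff_mod_eq_zero]
  refine ⟨fun h => ⟨h.2.2, h.1⟩, fun h => ⟨h.2, ?_, h.1⟩⟩
  rintro rfl
  have := h.1
  rw [Nat.mod_zero] at this
  exact h.2.ne' this

theorem prod_properDivisors (n : ℕ) (f : ℕ → ℤ[X]) :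
    ∏ i ∈ n.properDivisors, f i = ((properDivisorsList n).map f).prod := by
  have : n.properDivisors = (properDivisorsList n).toFinset := by
    ext i
    rw [List.mem_toFinset, mem_properDivisorsList]
  rw [this]
  exact List.prod_toFinset f (List.nodup_range.filter _)

theorem orders_spec : ∀ n ∈ orders, 0 < n ∧ (∀ i ∈ properDivisorsList n, i ∈ orders) ∧
    prodLists ((n :: properDivisorsList n).map cyclotomicList) =
      -1 :: (List.replicate (n - 1) 0 ++ [1]) := by
  decide +kernel

theorem cyclotomic_eq_ofList (n : ℕ) (hn : n ∈ orders) :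
    cyclotomic n ℤ = ofList (cyclotomicList n) := by
  induction n using Nat.strong_induction_on with
  | _ n ih =>
    obtain ⟨hpos, hdiv, hprod⟩ := orders_spec n hn
    refine ((eq_cyclotomic_iff hpos _).mpr ?_).symm
    have h : (properDivisorsList n).map (fun i => cyclotomic i ℤ) =
        (properDivisorsList n).map fun i => ofList (cyclotomicList i) :=
      List.map_congr_left fun i hi =>
        ih i (Nat.mem_properDivisors.mp (mem_properDivisorsList.mp hi)).2 (hdiv i hi)
    have := congrArg ofList hprod
    rw [ofList_prodLists, List.map_map, List.map_cons, List.prod_cons] at this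
    rw [prod_properDivisors, h]
    refine this.trans ?_
    rw [ofList, ofList_append, ofList_replicate_zero, List.length_replicate]
    obtain ⟨m, rfl⟩ := Nat.exists_eq_add_of_lt hpos
    simp only [ofList, Nat.zero_add, Nat.add_sub_cancel, C_neg, C_1]
    ring

theorem cyclotomicProducts_spec : ∀ e ∈ cyclotomicProducts, (∀ n ∈ e.2, n ∈ orders) ∧
    e.1 = prodLists (e.2.map cyclotomicList) := by
  decide +kernel

theorem isCyclotomicProduct_of_mem {e : List ℤ × List ℕ} (he : e ∈ cyclotomicProducts) :
    IsCyclotomicProduct (ofList e.1) := by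
  obtain ⟨ho, hp⟩ := cyclotomicProducts_spec e he
  refine ⟨e.2, fun n hn => (orders_spec n (ho n hn)).1, ?_⟩
  rw [hp, ofList_prodLists, List.map_map]
  exact congrArg List.prod (List.map_congr_left fun n hn => (cyclotomic_eq_ofList n (ho n hn)).symm)

theorem norm_eq_one_of_isCyclotomicProduct {P : ℤ[X]} (hP : IsCyclotomicProduct P) {α : ℂ}
    (hα : aeval α P = 0) : ‖α‖ = 1 := by
  obtain ⟨l, hl, rfl⟩ := hP
  rw [map_list_prod, List.prod_eq_zero_iff, List.map_map, List.mem_map] at hα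
  obtain ⟨n, hn, h⟩ := hα
  obtain ⟨Q, hQ⟩ := cyclotomic.dvd_X_pow_sub_one n ℤ
  refine Complex.norm_eq_one_of_pow_eq_one (n := n) ?_ (Nat.one_le_iff_ne_zero.mp (hl n hn))
  have := congrArg (aeval α) hQ
  rw [map_mul, show aeval α (cyclotomic n ℤ) = 0 from h, zero_mul] at this
  simpa [sub_eq_zero] using this

/-! ### The exceptional polynomials -/

def hasSmallRoot (p : List ℤ) (u v : ℤ) : Bool :=
  withTest (10 ^ 10 + 1) (10 ^ 200) (10 ^ 200 / 2) (10 ^ 200 * 10 ^ 200 + 1) p p.tail.length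
    ((u + v * 10 ^ 200) % (10 ^ 400 + 1)).toNat fun _ => true

theorem exceptional_spec : ∀ e ∈ exceptional,
    (e.1 = 1 :: (e.1.tail.dropLast ++ [1]) ∧ (∀ c ∈ e.1, c = 1 ∨ c = -1) ∧ e.1.length ≤ 13) ∧
    ((mulLists e.1 e.2.1).head? = some 1 ∧ ∀ c ∈ mulLists e.1 e.2.1, c = 0 ∨ c = 1) ∧
    hasSmallRoot e.1 e.2.2.1 e.2.2.2 = true := by
  decide +kernel

theorem isNewman_ofList {l : List ℤ} (h1 : l.head? = some 1) (h : ∀ c ∈ l, c = 0 ∨ c = 1) :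
    IsNewman (ofList l) := by
  refine ⟨?_, fun i => ?_⟩
  · cases l with
    | nil => simp at h1
    | cons a l =>
      rw [coeff_ofList]
      simpa using h1
  · rw [coeff_ofList]
    by_cases hi : i < l.length
    · rw [List.getD_eq_getElem _ _ hi]
      exact h _ (List.getElem_mem hi)
    · exact .inl (List.getD_eq_default _ _ (not_lt.mp hi))

theorem isLittlewood_ofList {l : List ℤ} (h : IsSigns l) : IsLittlewood (ofList (l ++ [1])) := by
  refine ⟨(monic_ofList l).ne_zero, fun i hi => ?_⟩
  rw [natDegree_ofList] at hi
  rw [coeff_ofList, List.getD_eq_getElem _ _ (by simpa using Nat.lt_succ_of_le hi)]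
  exact h.append_one _ (List.getElem_mem _)

theorem properties_of_mem_exceptional {e : List ℤ × List ℤ × ℤ × ℤ} (he : e ∈ exceptional) :
    (ofList e.1).Monic ∧ (ofList e.1).natDegree ≤ 12 ∧ IsLittlewood (ofList e.1) ∧
      (∃ N, IsNewman N ∧ ofList e.1 ∣ N) ∧ ¬IsCyclotomicProduct (ofList e.1) := by
  obtain ⟨⟨hv, hs, hlen⟩, ⟨h1, h01⟩, hroot⟩ := exceptional_spec e he
  have hN : ∃ N, IsNewman N ∧ ofList e.1 ∣ N :=
    ⟨_, isNewman_ofList h1 h01, ofList_mulLists e.1 e.2.1 ▸ dvd_mul_right _ _⟩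
  generalize e.1.tail.dropLast = v at hv
  rw [hv] at hs hlen hroot hN ⊢
  have hs : IsSigns (1 :: v) := fun z hz => hs z (by
    rw [← List.cons_append]
    exact List.mem_append_left _ hz)
  have hmonic := monic_ofList (1 :: v)
  have hdeg := natDegree_ofList (1 :: v)
  rw [List.cons_append] at hmonic hdeg
  simp only [List.length_cons, List.length_append, List.length_nil] at hlen hdeg
  refine ⟨hmonic, by omega, isLittlewood_ofList hs, hN, fun hcyc => ?_⟩
  obtain ⟨⟨α, hα, hlt⟩, -⟩ := withTest_sound rfl (by norm_num)
    (IsSigns.append_one fun z hz => hs z (List.mem_cons_of_mem _ hz)) rfl (by simp) hmonic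
    (by simpa using hdeg) hroot
  exact hlt.ne (norm_eq_one_of_isCyclotomicProduct hcyc hα)

/-! ### The classification -/

theorem checkDegree_of_le_nine : ∀ d ∈ [1, 2, 3, 4, 5, 6, 7, 8, 9],
    checkDegree special (rootData d) d = true := by
  decide +kernel

theorem checkDegree_ten : checkDegree special (rootData 10) 10 = true := by
  decide +kernel

theorem checkDegree_eleven : checkDegree special (rootData 11) 11 = true := by
  decide +kernel

theorem checkDegree_twelve : checkDegree special (rootData 12) 12 = true := by
  decide +kernel

theorem checkDegree_rootData {d : ℕ} (hd : d ≠ 0) (hd' : d ≤ 12) :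
    checkDegree special (rootData d) d = true := by
  by_cases h : d ≤ 9
  · exact checkDegree_of_le_nine d (by simp only [List.mem_cons, List.not_mem_nil]; omega)
  · obtain rfl | rfl | rfl : d = 10 ∨ d = 11 ∨ d = 12 := by omega
    exacts [checkDegree_ten, checkDegree_eleven, checkDegree_twelve]

theorem exists_eq_ofList {P : ℤ[X]} (hP : P.Monic) (hd : P.natDegree ≠ 0) (hL : IsLittlewood P) :
    ∃ v : List ℤ, IsSigns v ∧ v.length + 1 = P.natDegree ∧
      (P = ofList (1 :: (v ++ [1])) ∨ P.coeff 0 = -1) := by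
  obtain ⟨m, hm⟩ := Nat.exists_eq_succ_of_ne_zero hd
  refine ⟨(List.range m).map fun i => P.coeff (i + 1), fun z hz => ?_, by simp [hm], ?_⟩
  · obtain ⟨i, hi, rfl⟩ := List.mem_map.mp hz
    have := List.mem_range.mp hi
    exact hL.2 _ (by omega)
  · rcases hL.2 0 (Nat.zero_le _) with h0 | h0
    · left
      have h := eq_ofList P
      have hlead : P.coeff (m + 1) = 1 := by
        rw [← Nat.succ_eq_add_one, ← hm]
        exact hP
      rw [hm, List.range_succ_eq_map, List.range_succ, List.map_cons, List.map_map, List.map_append,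
        h0] at h
      simpa [Function.comp_def, hlead] using h
    · exact .inr h0

theorem mem_exceptional {P : ℤ[X]} (hP : P.Monic) (hd : P.natDegree ≤ 12) (hL : IsLittlewood P)
    (hN : ∃ N, IsNewman N ∧ P ∣ N) (hC : ¬IsCyclotomicProduct P) :
    ∃ e ∈ exceptional, ofList e.1 = P := by
  obtain ⟨N, hN, hdvd⟩ := hN
  by_cases hd0 : P.natDegree = 0
  · exact absurd ⟨[], by simp, by simpa using hP.natDegree_eq_zero.mp hd0⟩ hC
  obtain ⟨v, hv, hlen, rfl | h0⟩ := exists_eq_ofList hP hd0 hL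
  · have h := mem_special_or_noNewmanMultiple reverse_eq_of_mem_special hv
      (checkDegree_rootData (Nat.succ_ne_zero v.length) (hlen ▸ hd))
    rcases h with h | h
    · rcases List.mem_append.mp h with h | h
      · obtain ⟨e, he, h⟩ := List.mem_map.mp h
        exact absurd (h ▸ isCyclotomicProduct_of_mem he) hC
      · obtain ⟨e, he, h⟩ := List.mem_map.mp h
        exact ⟨e, he, congrArg ofList h⟩
    · exact absurd hdvd (h N hN)
  · refine absurd hdvd (noNewmanMultiple_of_eval_le hP hd0 le_rfl ?_ N hN)
    rw [← coeff_zero_eq_eval_zero, h0]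
    norm_num

end LittlewoodNewman

theorem monic_littlewood_deg_le_12_with_newman_multiple_classification
    (P : Polynomial ℤ) :
    (P.Monic ∧ P.natDegree ≤ 12 ∧ IsLittlewood P ∧
        (∃ N : Polynomial ℤ, IsNewman N ∧ P ∣ N) ∧ ¬ IsCyclotomicProduct P) ↔
      P ∈ ([X ^ 6 + X ^ 5 - X ^ 4 - X ^ 3 - X ^ 2 + X + 1,
        X ^ 7 + X ^ 6 - X ^ 5 + X ^ 4 + X ^ 3 - X ^ 2 + X + 1,
        X ^ 8 + X ^ 7 - X ^ 6 - X ^ 5 + X ^ 4 - X ^ 3 - X ^ 2 + X + 1,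
        X ^ 9 + X ^ 8 + X ^ 7 - X ^ 6 - X ^ 5 - X ^ 4 - X ^ 3 + X ^ 2 + X + 1,
        X ^ 10 - X ^ 9 + X ^ 8 + X ^ 7 - X ^ 6 + X ^ 5 - X ^ 4 + X ^ 3 + X ^ 2 - X + 1,
        X ^ 10 + X ^ 9 + X ^ 8 - X ^ 7 - X ^ 6 - X ^ 5 - X ^ 4 - X ^ 3 + X ^ 2 + X + 1,
        X ^ 12 + X ^ 11 - X ^ 10 - X ^ 9 - X ^ 8 + X ^ 7 + X ^ 6 + X ^ 5 - X ^ 4 - X ^ 3 - X ^ 2 + X + 1,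
        X ^ 12 - X ^ 11 + X ^ 10 + X ^ 9 - X ^ 8 + X ^ 7 + X ^ 6 + X ^ 5 - X ^ 4 + X ^ 3 + X ^ 2 - X + 1,
        X ^ 12 + X ^ 11 + X ^ 10 - X ^ 9 - X ^ 8 - X ^ 7 + X ^ 6 - X ^ 5 - X ^ 4 - X ^ 3 + X ^ 2 + X + 1]
        : List (Polynomial ℤ)) := by
  have key : P ∈ LittlewoodNewman.exceptional.map (fun e => LittlewoodNewman.ofList e.1) ↔
      (P.Monic ∧ P.natDegree ≤ 12 ∧ IsLittlewood P ∧
        (∃ N : Polynomial ℤ, IsNewman N ∧ P ∣ N) ∧ ¬ IsCyclotomicProduct P) := by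
    rw [List.mem_map]
    constructor
    · rintro ⟨e, he, rfl⟩
      exact LittlewoodNewman.properties_of_mem_exceptional he
    · rintro ⟨hP, hd, hL, hN, hC⟩
      exact LittlewoodNewman.mem_exceptional hP hd hL hN hC
  rw [← key]
  refine iff_of_eq (congrArg (P ∈ ·) ?_)
  simp only [LittlewoodNewman.exceptional, LittlewoodNewman.ofList, List.map_cons, List.map_nil,
    C_1, C_neg, List.cons.injEq, and_true]
  refine ⟨?_, ?_, ?_, ?_, ?_, ?_, ?_, ?_, ?_⟩ <;> ring
end

section
/- Let P ∈ ℤ[X] be a polynomial with odd constant term. If P divides a Littlewood polynomial L of degree n, then n + 1 is divisible by m(P); in particular, deg L ≥ m(P) − 1. -/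
open Polynomial

/-- For `P ∈ ℤ[X]`, `mdeg P` is the least positive integer `m` such that
`(X + 1) * P̄` divides `X ^ m - 1` in `𝔽₂[X]`, where `P̄` is the reduction of
`P` modulo `2` (and `0` if no such `m` exists). -/
noncomputable def mdeg (P : Polynomial ℤ) : ℕ :=
  sInf {m : ℕ | 0 < m ∧
    (X + 1) * P.map (Int.castRingHom (ZMod 2)) ∣ X ^ m - 1}

theorem Polynomial.dvd_X_pow_sub_one_iff_orderOf_root_dvd {R : Type*} [CommRing R] (Q : R[X])
    (m : ℕ) : Q ∣ X ^ m - 1 ↔ orderOf (AdjoinRoot.root Q) ∣ m := by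
  rw [← AdjoinRoot.mk_eq_zero, map_sub, map_pow, AdjoinRoot.mk_X, map_one, sub_eq_zero,
    orderOf_dvd_iff_pow_eq_one]

theorem mdeg_eq_orderOf_root (P : ℤ[X]) :
    mdeg P = orderOf (AdjoinRoot.root ((X + 1) * P.map (Int.castRingHom (ZMod 2)))) := by
  simp only [mdeg, Polynomial.dvd_X_pow_sub_one_iff_orderOf_root_dvd]
  generalize orderOf (AdjoinRoot.root ((X + 1) * P.map (Int.castRingHom (ZMod 2)))) = d
  rcases Nat.eq_zero_or_pos d with rfl | hd
  · rw [Nat.sInf_eq_zero]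
    right
    ext m
    simp only [Set.mem_ofPred_eq, Set.mem_empty_iff_false, zero_dvd_iff]
    lia
  · refine le_antisymm (Nat.sInf_le ⟨hd, dvd_rfl⟩) (le_csInf ⟨d, hd, dvd_rfl⟩ ?_)
    exact fun m hm => Nat.le_of_dvd hm.1 hm.2

theorem IsLittlewood.map_castRingHom_zmod_two {L : ℤ[X]} (hL : IsLittlewood L) :
    L.map (Int.castRingHom (ZMod 2)) = ∑ i ∈ Finset.range (L.natDegree + 1), X ^ i := by
  conv_lhs => rw [L.as_sum_range, Polynomial.map_sum]
  refine Finset.sum_congr rfl fun i hi => ?_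
  have hone : (-1 : ZMod 2) = 1 := by decide
  rw [map_monomial, X_pow_eq_monomial]
  rcases hL.2 i (Nat.lt_succ_iff.mp (Finset.mem_range.mp hi)) with h | h <;> simp [h, hone]

theorem IsLittlewood.X_add_one_mul_map_eq {L : ℤ[X]} (hL : IsLittlewood L) :
    (X + 1) * L.map (Int.castRingHom (ZMod 2)) = X ^ (L.natDegree + 1) - 1 := by
  rw [hL.map_castRingHom_zmod_two, ← mul_geom_sum, CharTwo.sub_eq_add]

theorem littlewood_multiple_degree_divisibility
    (P : Polynomial ℤ) (hP : Odd (P.coeff 0))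
    (L : Polynomial ℤ) (hL : IsLittlewood L) (hdvd : P ∣ L) :
    mdeg P ∣ L.natDegree + 1 ∧ mdeg P - 1 ≤ L.natDegree := by
  have h : mdeg P ∣ L.natDegree + 1 := by
    rw [mdeg_eq_orderOf_root, ← Polynomial.dvd_X_pow_sub_one_iff_orderOf_root_dvd,
      ← hL.X_add_one_mul_map_eq]
    exact mul_dvd_mul_left _ (Polynomial.map_dvd _ hdvd)
  exact ⟨h, Nat.sub_le_of_le_add (Nat.le_of_dvd (Nat.succ_pos _) h)⟩
end

section
/- The quadrinomial Q(X) = X^15 + X^10 + X^8 + 1 divides some Littlewood polynomial of degree 32765, and Q divides no Littlewood polynomial of degree less than 32765. -/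
open Polynomial

namespace QuadrinomialMultiple

/-- The bits are the coefficients of the quotient of `1 + X + ⋯ + X ^ 32765` by
`X ^ 15 + X ^ 10 + X ^ 8 + 1` over `𝔽₂`; the inverse power series of a polynomial `Q` with
constant coefficient `1` is approximated by the product of the `Q (X ^ 2 ^ i)`. -/
def support : ℕ :=
  (List.range 15).foldl
    (fun d i => (d ^^^ d <<< (8 * 2 ^ i) ^^^ d <<< (10 * 2 ^ i) ^^^ d <<< (15 * 2 ^ i)) % 2 ^ 32766)
    (2 ^ 32766 - 1)

/-- Bit `k` is set when at least three of the bits `k`, `k - 8`, `k - 10`, `k - 15` of `p` are. -/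
def threeOfFour (p : ℕ) : ℕ :=
  (p &&& p <<< 8 &&& p <<< 10) ||| (p &&& p <<< 8 &&& p <<< 15) |||
    (p &&& p <<< 10 &&& p <<< 15) ||| (p <<< 8 &&& p <<< 10 &&& p <<< 15)

/-- One round of local search for a sign pattern without three equal signs among the positions
`k`, `k - 8`, `k - 10`, `k - 15`: at each violation `k` the sign at `k - o` is flipped, unless
position `k - o` is masked by the support shifted by `t`. -/
def repair (d s t o : ℕ) : ℕ :=
  s ^^^ ((threeOfFour s ||| threeOfFour (d ^^^ s)) >>> o &&& (d ^^^ (d &&& d >>> t)))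

/-- The positions of the negative coefficients of the cofactor. -/
def negatives : ℕ :=
  (List.range 81).foldl
    (fun s i => repair support (repair support (repair support (repair support s
      (4 * i) 0) (4 * i + 1) 15) (4 * i + 2) 8) (4 * i + 3) 10) 0

/-- The positions of the positive coefficients of the cofactor. -/
def positives : ℕ := support ^^^ negatives

/-- The positions `k` such that one of the bits `k - 14, …, k` of the support is set. -/
def window : ℕ := (List.range 15).foldl (fun w t => w ||| support <<< t) 0

theorem support_lt : support < 2 ^ 32751 := by decide +kernel

theorem support_parity :
    support ^^^ support <<< 8 ^^^ support <<< 10 ^^^ support <<< 15 = 2 ^ 32766 - 1 := by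
  decide +kernel

theorem window_mod : window % 2 ^ 32765 = 2 ^ 32765 - 1 := by decide +kernel

theorem negatives_and_support : negatives &&& support = negatives := by decide +kernel

theorem threeOfFour_negatives : threeOfFour negatives = 0 := by decide +kernel

theorem threeOfFour_positives : threeOfFour positives = 0 := by decide +kernel

theorem testBit_threeOfFour_eq_false {p : ℕ} (h : threeOfFour p = 0) (k : ℕ) :
    let a := p.testBit k
    let b := decide (8 ≤ k) && p.testBit (k - 8)
    let c := decide (10 ≤ k) && p.testBit (k - 10)
    let d := decide (15 ≤ k) && p.testBit (k - 15)
    (a && b && c || a && b && d || a && c && d || b && c && d) = false := by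
  simpa [threeOfFour, Nat.testBit_or, Nat.testBit_and, Nat.testBit_shiftLeft] using
    congrArg (Nat.testBit · k) h

/-- The cofactor of the quadrinomial. -/
noncomputable def cofactor : ℤ[X] :=
  ∑ i ∈ Finset.range 32751,
    monomial i (((positives.testBit i).toNat : ℤ) - (negatives.testBit i).toNat)

theorem testBit_negatives_le (k : ℕ) (h : negatives.testBit k = true) :
    support.testBit k = true := by
  rw [← negatives_and_support, Nat.testBit_and] at h
  exact (Bool.and_eq_true_iff.mp h).2

theorem coeff_cofactor (k : ℕ) :
    cofactor.coeff k = ((positives.testBit k).toNat : ℤ) - (negatives.testBit k).toNat := by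
  simp only [cofactor, finsetSum_coeff, coeff_monomial, Finset.sum_ite_eq', Finset.mem_range]
  split_ifs with hk
  · rfl
  · have hs : support.testBit k = false :=
      Nat.testBit_eq_false_of_lt (lt_of_lt_of_le support_lt
        (Nat.pow_le_pow_right Nat.two_pos (not_lt.mp hk)))
    have hn : negatives.testBit k = false := by
      by_contra h
      simp [testBit_negatives_le k (by simpa using h)] at hs
    simp [positives, Nat.testBit_xor, hs, hn]

theorem natDegree_cofactor_le : cofactor.natDegree ≤ 32750 := by
  refine natDegree_sum_le_of_forall_le _ _ fun i hi => (natDegree_monomial_le _).trans ?_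
  have := Finset.mem_range.mp hi
  omega

theorem two_dvd_coeff_cofactor (k : ℕ) :
    2 ∣ cofactor.coeff k ↔ support.testBit k = false := by
  have h := testBit_negatives_le k
  rw [coeff_cofactor, positives, Nat.testBit_xor]
  revert h
  cases support.testBit k <;> cases negatives.testBit k <;> simp

theorem coeff_quadrinomial_mul (A : ℤ[X]) (k : ℕ) :
    ((X ^ 15 + X ^ 10 + X ^ 8 + 1) * A).coeff k =
      (if 15 ≤ k then A.coeff (k - 15) else 0) + (if 10 ≤ k then A.coeff (k - 10) else 0) +
        (if 8 ≤ k then A.coeff (k - 8) else 0) + A.coeff k := by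
  simp [add_mul, coeff_X_pow_mul']

theorem natDegree_quadrinomial : (X ^ 15 + X ^ 10 + X ^ 8 + 1 : ℤ[X]).natDegree = 15 := by
  compute_degree!

theorem coeff_quadrinomial_mul_cofactor {k : ℕ} (hk : k < 32766) :
    ((X ^ 15 + X ^ 10 + X ^ 8 + 1) * cofactor).coeff k = 1 ∨
      ((X ^ 15 + X ^ 10 + X ^ 8 + 1) * cofactor).coeff k = -1 := by
  have h : (support.testBit k ^^ (decide (8 ≤ k) && support.testBit (k - 8)) ^^
      (decide (10 ≤ k) && support.testBit (k - 10)) ^^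
      (decide (15 ≤ k) && support.testBit (k - 15))) = true := by
    simpa only [Nat.testBit_xor, Nat.testBit_shiftLeft, Nat.testBit_two_pow_sub_one, hk,
      decide_true, ge_iff_le] using congrArg (Nat.testBit · k) support_parity
  have hn := testBit_threeOfFour_eq_false threeOfFour_negatives k
  have hp := testBit_threeOfFour_eq_false threeOfFour_positives k
  have s0 := testBit_negatives_le k
  have s1 := testBit_negatives_le (k - 8)
  have s2 := testBit_negatives_le (k - 10)
  have s3 := testBit_negatives_le (k - 15)
  rw [coeff_quadrinomial_mul]
  simp only [coeff_cofactor, positives, Nat.testBit_xor] at hp ⊢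
  generalize support.testBit k = a0, support.testBit (k - 8) = a1,
    support.testBit (k - 10) = a2, support.testBit (k - 15) = a3, negatives.testBit k = b0,
    negatives.testBit (k - 8) = b1, negatives.testBit (k - 10) = b2,
    negatives.testBit (k - 15) = b3 at *
  simp only [← Bool.cond_decide]
  generalize decide (8 ≤ k) = c1, decide (10 ≤ k) = c2, decide (15 ≤ k) = c3 at *
  clear hk
  revert a0 a1 a2 a3 b0 b1 b2 b3 c1 c2 c3
  decide +kernel

theorem two_dvd_sub_coeff_cofactor {B : ℤ[X]} {m : ℕ} (hm : m ≤ 32766)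
    (hB : ∀ k < m, ¬ 2 ∣ ((X ^ 15 + X ^ 10 + X ^ 8 + 1) * B).coeff k) (k : ℕ) (hk : k < m) :
    2 ∣ B.coeff k - cofactor.coeff k := by
  induction k using Nat.strong_induction_on with
  | _ k ih =>
    have h₁ := hB k hk
    have h₂ := coeff_quadrinomial_mul_cofactor (hk.trans_le hm)
    have h8 := fun h : 8 ≤ k => ih (k - 8) (by omega) (by omega)
    have h10 := fun h : 10 ≤ k => ih (k - 10) (by omega) (by omega)
    have h15 := fun h : 15 ≤ k => ih (k - 15) (by omega) (by omega)
    rw [coeff_quadrinomial_mul] at h₁ h₂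
    clear ih hB
    split_ifs at h₁ h₂ <;> omega

theorem exists_testBit_support {k : ℕ} (hk : k < 32765) :
    ∃ t < 15, t ≤ k ∧ support.testBit (k - t) = true := by
  have h := congrArg (Nat.testBit · k) window_mod
  simp only [Nat.testBit_mod_two_pow, Nat.testBit_two_pow_sub_one, hk, decide_true,
    Bool.true_and] at h
  have fold : ∀ (l : List ℕ) (w : ℕ),
      (l.foldl (fun w t => w ||| support <<< t) w).testBit k = true →
        w.testBit k = true ∨ ∃ t ∈ l, t ≤ k ∧ support.testBit (k - t) = true := by
    intro l
    induction l with
    | nil => intro w hw; exact Or.inl hw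
    | cons t l ih =>
      intro w hw
      rcases ih _ hw with h | ⟨u, hu, h⟩
      · rw [Nat.testBit_or, Nat.testBit_shiftLeft] at h
        simp only [ge_iff_le, Bool.or_eq_true, Bool.and_eq_true, decide_eq_true_eq] at h
        exact h.imp id fun h => ⟨t, by simp, h⟩
      · exact Or.inr ⟨u, by simp [hu], h⟩
  simpa using fold _ _ h

theorem natDegree_quadrinomial_mul_cofactor :
    ((X ^ 15 + X ^ 10 + X ^ 8 + 1) * cofactor).natDegree = 32765 := by
  apply natDegree_eq_of_le_of_coeff_ne_zero
  · exact natDegree_mul_le_of_le natDegree_quadrinomial.le natDegree_cofactor_le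
  · rcases coeff_quadrinomial_mul_cofactor (Nat.lt_add_one 32765) with h | h <;> rw [h] <;> decide

theorem isLittlewood_quadrinomial_mul_cofactor :
    IsLittlewood ((X ^ 15 + X ^ 10 + X ^ 8 + 1) * cofactor) := by
  refine ⟨ne_zero_of_natDegree_gt (n := 0) ?_, fun i hi => ?_⟩
  · rw [natDegree_quadrinomial_mul_cofactor]
    norm_num
  · rw [natDegree_quadrinomial_mul_cofactor] at hi
    exact coeff_quadrinomial_mul_cofactor (Nat.lt_succ_of_le hi)

theorem exists_isLittlewood_quadrinomial_mul :
    ∃ A : ℤ[X], IsLittlewood ((X ^ 15 + X ^ 10 + X ^ 8 + 1) * A) ∧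
      ((X ^ 15 + X ^ 10 + X ^ 8 + 1) * A).natDegree = 32765 :=
  ⟨cofactor, isLittlewood_quadrinomial_mul_cofactor, natDegree_quadrinomial_mul_cofactor⟩

theorem le_natDegree_of_isLittlewood_mul {B : ℤ[X]}
    (hL : IsLittlewood ((X ^ 15 + X ^ 10 + X ^ 8 + 1) * B)) :
    32765 ≤ ((X ^ 15 + X ^ 10 + X ^ 8 + 1) * B).natDegree := by
  obtain ⟨hne, hcoeff⟩ := hL
  have hdeg := natDegree_mul (left_ne_zero_of_mul hne) (right_ne_zero_of_mul hne)
  rw [natDegree_quadrinomial] at hdeg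
  generalize ((X ^ 15 + X ^ 10 + X ^ 8 + 1) * B).natDegree = n at *
  by_contra! hlt
  obtain ⟨t, ht, -, hbit⟩ := exists_testBit_support hlt
  have h := two_dvd_sub_coeff_cofactor (m := n + 1) (Nat.succ_le_succ hlt.le)
    (fun k hk => by rcases hcoeff k (by omega) with h | h <;> rw [h] <;> decide)
    (n - t) (by omega)
  rw [coeff_eq_zero_of_natDegree_lt (by omega), zero_sub, dvd_neg, two_dvd_coeff_cofactor,
    hbit] at h
  exact absurd h (by decide)

end QuadrinomialMultiple

open QuadrinomialMultiple in
theorem quadrinomial_15_10_8_minimal_littlewood_multiple :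
    (∃ L : Polynomial ℤ, IsLittlewood L ∧ L.natDegree = 32765 ∧
      (X ^ 15 + X ^ 10 + X ^ 8 + 1 : Polynomial ℤ) ∣ L) ∧
    (∀ L : Polynomial ℤ, IsLittlewood L →
      (X ^ 15 + X ^ 10 + X ^ 8 + 1 : Polynomial ℤ) ∣ L → 32765 ≤ L.natDegree) := by
  constructor
  · obtain ⟨A, hL, hdeg⟩ := exists_isLittlewood_quadrinomial_mul
    exact ⟨_, hL, hdeg, dvd_mul_right _ _⟩
  · rintro _ hL ⟨B, rfl⟩
    exact le_natDegree_of_isLittlewood_mul hL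
end

section
/- There exist at least four pairwise distinct monic Littlewood polynomials of degree 1189, each of which is divisible by the polynomial P(X) = X^12 + X^11 + X^10 + 1; moreover, P divides no Littlewood polynomial of degree less than 1189. -/
open Polynomial

namespace LittlewoodMultiple

/-- The polynomial `X ^ 12 + X ^ 11 + X ^ 10 + 1` over an arbitrary ring. -/
noncomputable def divisor (R : Type*) [CommRing R] : R[X] := X ^ 12 + X ^ 11 + X ^ 10 + 1

/-- The polynomial whose coefficients, constant term first, are the entries of a list. -/
noncomputable def ofCoeffs {R : Type*} [CommRing R] (l : List R) : R[X] :=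
  l.foldr (fun c p => C c + X * p) 0

/-- Coefficients, constant term first, of a residue modulo `divisor R`. -/
abbrev Residue (R : Type*) : Type _ := R × R × R × R × R × R × R × R × R × R × R × R

instance (R : Type*) [DecidableEq R] : DecidableEq (Residue R) :=
  letI : DecidableEq (R × R × R × R) := inferInstance
  letI : DecidableEq (R × R × R × R × R × R × R × R) := inferInstance
  inferInstance

/-- The polynomial of degree less than `12` with the given coefficients. -/
noncomputable def Residue.toPoly {R : Type*} [CommRing R] : Residue R → R[X]
  | (a₀, a₁, a₂, a₃, a₄, a₅, a₆, a₇, a₈, a₉, a₁₀, a₁₁) =>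
    ofCoeffs [a₀, a₁, a₂, a₃, a₄, a₅, a₆, a₇, a₈, a₉, a₁₀, a₁₁]

/-- Horner step `r ↦ c + X * r` modulo `divisor R`. -/
def hornerStep {R : Type*} [CommRing R] (c : R) : Residue R → Residue R
  | (a₀, a₁, a₂, a₃, a₄, a₅, a₆, a₇, a₈, a₉, a₁₀, a₁₁) =>
    (c - a₁₁, a₀, a₁, a₂, a₃, a₄, a₅, a₆, a₇, a₈, a₉ - a₁₁, a₁₀ - a₁₁)

section CommRing

variable {R : Type*} [CommRing R]

theorem coeff_ofCoeffs (l : List R) (i : ℕ) : (ofCoeffs l).coeff i = l.getD i 0 := by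
  induction l generalizing i with
  | nil => simp [ofCoeffs]
  | cons c l ih =>
    cases i with
    | zero => simp [ofCoeffs]
    | succ i => simpa [ofCoeffs, coeff_C] using ih i

theorem degree_ofCoeffs_lt (l : List R) : (ofCoeffs l).degree < l.length := by
  rw [degree_lt_iff_coeff_zero]
  intro i hi
  rw [coeff_ofCoeffs, List.getD_eq_default _ _ hi]

theorem toPoly_hornerStep (c : R) (r : Residue R) :
    divisor R ∣ C c + X * r.toPoly - (hornerStep c r).toPoly := by
  obtain ⟨a₀, a₁, a₂, a₃, a₄, a₅, a₆, a₇, a₈, a₉, a₁₀, a₁₁⟩ := r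
  refine ⟨C a₁₁, ?_⟩
  simp only [Residue.toPoly, hornerStep, ofCoeffs, List.foldr_cons, List.foldr_nil, C_sub, divisor]
  ring

theorem toPoly_zero : (0 : Residue R).toPoly = 0 := by
  simp [Residue.toPoly, ofCoeffs]

theorem divisor_dvd_ofCoeffs_sub (l : List R) :
    divisor R ∣ ofCoeffs l - (l.foldr hornerStep 0).toPoly := by
  induction l with
  | nil => simp [toPoly_zero, ofCoeffs]
  | cons c l ih =>
    have h := (ih.mul_left X).add (toPoly_hornerStep c (l.foldr hornerStep 0))
    convert h using 1
    simp only [ofCoeffs, List.foldr_cons]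
    ring

theorem divisor_dvd_ofCoeffs {l : List R} (h : l.foldr hornerStep 0 = 0) :
    divisor R ∣ ofCoeffs l := by
  have hdvd := divisor_dvd_ofCoeffs_sub l
  rwa [h, toPoly_zero, sub_zero] at hdvd

theorem divisor_eq_ofCoeffs_add :
    divisor R = X ^ 12 + ofCoeffs [1, 0, 0, 0, 0, 0, 0, 0, 0, 0, 1, 1] := by
  simp only [divisor, ofCoeffs, List.foldr_cons, List.foldr_nil, C_0, C_1]
  ring

theorem foldr_hornerStep_eq_zero [Nontrivial R] {l : List R} (h : divisor R ∣ ofCoeffs l) :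
    l.foldr hornerStep 0 = 0 := by
  have hmonic : (divisor R).Monic := by
    rw [divisor_eq_ofCoeffs_add]
    exact monic_X_pow_add (degree_ofCoeffs_lt _)
  have hdegree : (divisor R).degree = 12 := by
    rw [divisor_eq_ofCoeffs_add]
    rw [degree_add_eq_left_of_degree_lt, degree_X_pow]
    · rfl
    · rw [degree_X_pow]
      exact degree_ofCoeffs_lt _
  have hdvd := (dvd_sub_right h).1 (divisor_dvd_ofCoeffs_sub l)
  generalize l.foldr hornerStep 0 = r at hdvd ⊢
  obtain ⟨a₀, a₁, a₂, a₃, a₄, a₅, a₆, a₇, a₈, a₉, a₁₀, a₁₁⟩ := r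
  have hzero : Residue.toPoly (a₀, a₁, a₂, a₃, a₄, a₅, a₆, a₇, a₈, a₉, a₁₀, a₁₁) = 0 := by
    by_contra hne
    refine hmonic.not_dvd_of_degree_lt hne ?_ hdvd
    rw [hdegree]
    exact degree_ofCoeffs_lt _
  have hcoeff (i : ℕ) := (coeff_ofCoeffs _ i).symm.trans (congrArg (coeff · i) hzero)
  simp only [Prod.zero_eq_mk, Prod.mk.injEq]
  exact ⟨hcoeff 0, hcoeff 1, hcoeff 2, hcoeff 3, hcoeff 4, hcoeff 5, hcoeff 6, hcoeff 7, hcoeff 8,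
    hcoeff 9, hcoeff 10, hcoeff 11⟩

end CommRing

/-- The first `n` binary digits of `N`, lowest first, with `0` replaced by `-1`. -/
def signs (n N : ℕ) : List ℤ := (List.range n).map fun i => if N.testBit i then 1 else -1

theorem coeff_ofCoeffs_signs {n N i : ℕ} (hi : i < n) :
    (ofCoeffs (signs n N)).coeff i = if N.testBit i then 1 else -1 := by
  simp [coeff_ofCoeffs, signs, hi]

theorem natDegree_ofCoeffs_signs (n N : ℕ) : (ofCoeffs (signs (n + 1) N)).natDegree = n := by
  apply natDegree_eq_of_le_of_coeff_ne_zero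
  · rw [natDegree_le_iff_coeff_eq_zero]
    intro i hi
    rw [coeff_ofCoeffs, List.getD_eq_default]
    simpa [signs] using hi
  · rw [coeff_ofCoeffs_signs n.lt_succ_self]
    split <;> simp

theorem isLittlewood_ofCoeffs_signs (n N : ℕ) : IsLittlewood (ofCoeffs (signs (n + 1) N)) := by
  have hcoeff : ∀ i ≤ n, (ofCoeffs (signs (n + 1) N)).coeff i = 1 ∨
      (ofCoeffs (signs (n + 1) N)).coeff i = -1 := by
    intro i hi
    rw [coeff_ofCoeffs_signs (Nat.lt_succ_of_le hi)]
    split <;> simp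
  refine ⟨fun h => ?_, fun i hi => hcoeff i (by rwa [natDegree_ofCoeffs_signs] at hi)⟩
  simpa [h] using hcoeff 0 n.zero_le

theorem monic_ofCoeffs_signs {n N : ℕ} (h : N.testBit n = true) :
    (ofCoeffs (signs (n + 1) N)).Monic := by
  rw [Monic, leadingCoeff, natDegree_ofCoeffs_signs, coeff_ofCoeffs_signs n.lt_succ_self, if_pos h]

theorem ofCoeffs_signs_ne {n N M : ℕ} (i : ℕ) (hi : i < n) (h : N.testBit i ≠ M.testBit i) :
    ofCoeffs (signs n N) ≠ ofCoeffs (signs n M) := by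
  intro heq
  have hcoeff := congrArg (coeff · i) heq
  simp only [coeff_ofCoeffs_signs hi] at hcoeff
  revert hcoeff h
  cases N.testBit i <;> cases M.testBit i <;> simp

theorem monic_littlewood_multiple_of_signs {n N : ℕ} (hN : N.testBit n = true)
    (h : (signs (n + 1) N).foldr hornerStep 0 = 0) :
    (ofCoeffs (signs (n + 1) N)).Monic ∧ IsLittlewood (ofCoeffs (signs (n + 1) N)) ∧
      (ofCoeffs (signs (n + 1) N)).natDegree = n ∧
      (X ^ 12 + X ^ 11 + X ^ 10 + 1 : ℤ[X]) ∣ ofCoeffs (signs (n + 1) N) :=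
  ⟨monic_ofCoeffs_signs hN, isLittlewood_ofCoeffs_signs n N, natDegree_ofCoeffs_signs n N,
    divisor_dvd_ofCoeffs h⟩

theorem map_eq_ofCoeffs_replicate {L : ℤ[X]} (hL : IsLittlewood L) :
    L.map (Int.castRingHom (ZMod 2)) = ofCoeffs (List.replicate (L.natDegree + 1) 1) := by
  ext i
  rw [coeff_map, coeff_ofCoeffs]
  rcases Nat.lt_or_ge L.natDegree i with hi | hi
  · rw [coeff_eq_zero_of_natDegree_lt hi, List.getD_eq_default _ _ (by simpa using hi), map_zero]
  · rw [List.getD_eq_getElem _ _ (by simpa [Nat.lt_succ_iff] using hi), List.getElem_replicate]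
    rcases hL.2 i hi with h | h <;> rw [h]
    · simp
    · decide

theorem foldr_replicate_eq_iterate {α β : Type*} (f : α → β → β) (a : α) (b : β) (n : ℕ) :
    (List.replicate n a).foldr f b = (f a)^[n] b := by
  induction n with
  | zero => rfl
  | succ n ih => rw [List.replicate_succ, List.foldr_cons, ih, Function.iterate_succ_apply']

theorem dvd_of_isPeriodicPt_hornerStep_one {n : ℕ}
    (h : Function.IsPeriodicPt (hornerStep (1 : ZMod 2)) n 0) : 1190 ∣ n := by
  have hperiod : Function.IsPeriodicPt (hornerStep (1 : ZMod 2)) 1190 0 := by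
    unfold Function.IsPeriodicPt Function.IsFixedPt
    decide +kernel
  have hproper : ∀ d ∈ [595, 238, 170, 70],
      ¬ Function.IsPeriodicPt (hornerStep (1 : ZMod 2)) d 0 := by
    unfold Function.IsPeriodicPt Function.IsFixedPt
    decide +kernel
  have hdivisors : ∀ d ∈ Nat.divisors 1190, d = 1190 ∨ ∃ e ∈ [595, 238, 170, 70], d ∣ e := by
    decide +kernel
  rcases hdivisors (n.gcd 1190) (by simp [Nat.gcd_dvd_right]) with hd | ⟨e, he, hd⟩
  · exact Nat.gcd_eq_right_iff_dvd.1 hd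
  · exact absurd ((h.gcd hperiod).trans_dvd hd) (hproper e he)

theorem dvd_natDegree_add_one {L : ℤ[X]} (hL : IsLittlewood L)
    (hdvd : (X ^ 12 + X ^ 11 + X ^ 10 + 1 : ℤ[X]) ∣ L) : 1190 ∣ L.natDegree + 1 := by
  have hmap := Polynomial.map_dvd (Int.castRingHom (ZMod 2)) hdvd
  rw [map_eq_ofCoeffs_replicate hL] at hmap
  apply dvd_of_isPeriodicPt_hornerStep_one
  have hzero := foldr_hornerStep_eq_zero (R := ZMod 2) (by simpa [divisor] using hmap)
  rwa [foldr_replicate_eq_iterate] at hzero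

/-- Binary sign pattern of a Littlewood multiple of degree `1189`. -/
def signCode₁ : ℕ :=
  15198099425265387642195003067869378233696761707306375603260120099469594557297166519932870145565617097814792028564200564967885218249389243152052153564515842477088653601652144977047146552059339114240336205465159283108230510750100177155948990065784729298007863166783519168062485056640674429765923563476126717512879345470372423997718825548706923075903196687585962

/-- Binary sign pattern of another Littlewood multiple of degree `1189`. -/
def signCode₂ : ℕ :=
  15198099425267061371662722325989182320852442861082450700749685431145571540074518352473039205801617600986093996130155009712430598667614256172726210231757889365685041550073225893392608574200500439726481629013957764579201645550348228593255643161939186508961379319082081059149311223416577736352028346733954744401891048559226201418493970839750297269583591998532437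

/-- Binary sign pattern of another Littlewood multiple of degree `1189`. -/
def signCode₃ : ℕ :=
  15198099425267061371662722325989182320852442861082450700749685431145571540074518352473039205801617600986093971502142151461334079569478351355599064993685233876008219512989594035587534048929749318794438413125402633941956824760017481468406546335551934615017589948036285964479150864305132287468813108993568557784411018994412828104762648187596485489178988903181141

/-- Binary sign pattern of another Littlewood multiple of degree `1189`. -/
def signCode₄ : ℕ :=
  15864901936430926079310065747000064228104481703075185977051369998510219899815228740553438210511040846622064413427671628337987886212160761842990978193408187275348065958846047897244667408063141440365215232229862248039802269292541762088786536860124920652089520569877942352746334992393414816516032235570224636017402072035636392844231027268865800104609569701223093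

end LittlewoodMultiple

open LittlewoodMultiple

theorem four_minimal_littlewood_multiples_of_X12_X11_X10_1 :
    (∃ L₁ L₂ L₃ L₄ : Polynomial ℤ,
      L₁ ≠ L₂ ∧ L₁ ≠ L₃ ∧ L₁ ≠ L₄ ∧ L₂ ≠ L₃ ∧ L₂ ≠ L₄ ∧ L₃ ≠ L₄ ∧
      (∀ L ∈ [L₁, L₂, L₃, L₄], L.Monic ∧ IsLittlewood L ∧ L.natDegree = 1189 ∧
        (X ^ 12 + X ^ 11 + X ^ 10 + 1 : Polynomial ℤ) ∣ L)) ∧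
    (∀ L : Polynomial ℤ, IsLittlewood L →
      (X ^ 12 + X ^ 11 + X ^ 10 + 1 : Polynomial ℤ) ∣ L → 1189 ≤ L.natDegree) := by
  refine ⟨⟨ofCoeffs (signs 1190 signCode₁), ofCoeffs (signs 1190 signCode₂),
    ofCoeffs (signs 1190 signCode₃), ofCoeffs (signs 1190 signCode₄),
    ofCoeffs_signs_ne 0 (by norm_num) (by decide +kernel),
    ofCoeffs_signs_ne 0 (by norm_num) (by decide +kernel),
    ofCoeffs_signs_ne 0 (by norm_num) (by decide +kernel),
    ofCoeffs_signs_ne 594 (by norm_num) (by decide +kernel),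
    ofCoeffs_signs_ne 5 (by norm_num) (by decide +kernel),
    ofCoeffs_signs_ne 5 (by norm_num) (by decide +kernel),
    ?_⟩, fun L hL hdvd => ?_⟩
  · simp only [List.forall_mem_cons, List.not_mem_nil, false_imp_iff, implies_true, and_true]
    exact ⟨monic_littlewood_multiple_of_signs (by decide +kernel) (by decide +kernel),
      monic_littlewood_multiple_of_signs (by decide +kernel) (by decide +kernel),
      monic_littlewood_multiple_of_signs (by decide +kernel) (by decide +kernel),
      monic_littlewood_multiple_of_signs (by decide +kernel) (by decide +kernel)⟩
  · have := Nat.le_of_dvd (Nat.succ_pos _) (dvd_natDegree_add_one hL hdvd)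
    omega
end
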